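/- For every integer k ≥ 2 and every ε > 0 there exists L > 0 with the following property. For any finitely supported random variable X taking values in G = 𝔽₂ⁿ, there exists a subspace V ⊆ G with H[𝐔_V] ≤ L·H[X] such that, writing X̃ = π_V(X), at least one of the following holds: (i) H[X̃] ≤ ε H[X], or (ii) X̃ is (k, ε)-dissociated, i.e. H[X̃₁ + … + X̃_k] ≥ (k − ε) H[X̃], where X̃₁, …, X̃_k are independent copies of X̃. -/

import Mathlib

open Real Pointwise

noncomputable section

abbrev Fvec (n : ℕ) : Type := Fin n → ZMod 2

/-- Shannon entropy (natural log) of a finitely supported distribution. -/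
def ent {A : Type*} (p : A → ℝ) : ℝ := ∑ᶠ a, Real.negMulLog (p a)

/-- `p` is a (finitely supported) probability distribution. -/
def IsDist {A : Type*} (p : A → ℝ) : Prop := (∀ a, 0 ≤ p a) ∧ ∑ᶠ a, p a = 1

/-- Pushforward of a distribution along a map: the distribution of `f(X)` for `X ∼ p`. -/
def push {A B : Type*} (f : A → B) (p : A → ℝ) : B → ℝ := fun b => ∑ᶠ a ∈ f ⁻¹' {b}, p a

/-- Joint distribution of a pair of independent random variables. -/
def prodDist {A B : Type*} (p : A → ℝ) (q : B → ℝ) : A × B → ℝ := fun z => p z.1 * q z.2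

/-- Distribution of `X + Y` for independent `X ∼ p`, `Y ∼ q`. -/
def conv {A : Type*} [AddGroup A] (p q : A → ℝ) : A → ℝ := fun z => ∑ᶠ x, p x * q (z - x)

/-- The distribution of `X` conditioned on `U = b`, where `r` is the joint distribution of `(X, U)`. -/
def fiber {A B : Type*} (r : A × B → ℝ) (b : B) : A → ℝ := fun a => r (a, b) / push Prod.snd r b

/-- Conditional entropy `H[X | U]` of a joint distribution `r` of `(X, U)`. -/
def condEnt {A B : Type*} (r : A × B → ℝ) : ℝ := ∑ᶠ b, push Prod.snd r b * ent (fiber r b)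

/-- Doubling mass `s[X ; Y]` (of independent copies with distributions `p`, `q`). -/
def sDouble {A : Type*} [AddGroup A] (p q : A → ℝ) : ℝ := ent p + ent q - ent (conv p q)

/-- Conditional doubling mass `s[X | U ; Y | W] = 𝔼_{u ∼ U, w ∼ W} s[X_u ; Y_w]`,
where `r1`, `r2` are the joint distributions of `(X, U)` and `(Y, W)`. -/
def sCond {A U W : Type*} [AddGroup A] (r1 : A × U → ℝ) (r2 : A × W → ℝ) : ℝ :=
  ∑ᶠ u, ∑ᶠ w, push Prod.snd r1 u * push Prod.snd r2 w * sDouble (fiber r1 u) (fiber r2 w)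

/-- Conditional mutual information `I[A : B | S]` of a joint distribution of `(A, B, S)`. -/
def condMI {A B S : Type*} (r : A × B × S → ℝ) : ℝ :=
  ent (push (fun z => (z.1, z.2.2)) r) + ent (push (fun z => z.2) r)
    - ent r - ent (push (fun z => z.2.2) r)

/-- Uniform distribution on a set. -/
def unifOn {A : Type*} (s : Set A) : A → ℝ := s.indicator fun _ => (Nat.card s : ℝ)⁻¹

/-- Entropic Ruzsa distance `d[X ; Y]`. -/
def dRuzsa {A : Type*} [AddGroup A] (p q : A → ℝ) : ℝ := ent (conv p q) - ent p / 2 - ent q / 2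

/-- Joint distribution of `(X, X + Y)` for independent `X ∼ p`, `Y ∼ q`. -/
def jointSum {A : Type*} [AddGroup A] (p q : A → ℝ) : A × A → ℝ :=
  push (fun z : A × A => (z.1, z.1 + z.2)) (prodDist p q)

/-- Joint distribution of `(X, π_V(X))`. -/
def selfProj {n : ℕ} (V : Submodule (ZMod 2) (Fvec n)) (p : Fvec n → ℝ) :
    Fvec n × (Fvec n ⧸ V) → ℝ := push (fun x => (x, V.mkQ x)) p

/-- Joint distribution of independent `(X₁, X₂, Y₁, Y₂)` with `X₁, X₂ ∼ p` and `Y₁, Y₂ ∼ q`. -/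
def quad {A : Type*} (p q : A → ℝ) : A × A × A × A → ℝ :=
  fun z => p z.1 * p z.2.1 * q z.2.2.1 * q z.2.2.2

/-- Distribution of `X₁ + ⋯ + X_k` for independent `Xᵢ ∼ p i`. -/
def indepSum {A : Type*} [AddCommGroup A] (k : ℕ) (p : Fin k → A → ℝ) : A → ℝ :=
  push (fun x : Fin k → A => ∑ i, x i) (fun x => ∏ i, p i (x i))

/-- Statement `A(η, L, c)` from the paper. -/
def StA (η L c : ℝ) : Prop :=
  ∀ (n : ℕ) (p q : Fvec n → ℝ), IsDist p → IsDist q →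
    ent (conv p q) ≤ (1 - η) * (ent p + ent q) →
    ∃ V : Submodule (ZMod 2) (Fvec n),
      ent (unifOn (V : Set (Fvec n))) ≤ L * (ent p + ent q) ∧
      ent (push V.mkQ p) + ent (push V.mkQ q) ≤ (1 - c) * (ent p + ent q)

/-- Statement `B(η, ε, L)` from the paper. -/
def StB (η ε L : ℝ) : Prop :=
  ∀ (n : ℕ) (p q : Fvec n → ℝ), IsDist p → IsDist q →
    ∃ V : Submodule (ZMod 2) (Fvec n),
      ent (unifOn (V : Set (Fvec n))) ≤ L * (ent p + ent q) ∧
      ent (conv (push V.mkQ p) (push V.mkQ q)) ≥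
        (1 - η) * (ent (push V.mkQ p) + ent (push V.mkQ q)) - ε * (ent p + ent q)


/-! Part 1: basic calculus of finite entropies. -/

namespace DS

section basics

variable {Ω A B C : Type*}

lemma ent_eq_sum [Fintype A] (p : A → ℝ) : ent p = ∑ a, Real.negMulLog (p a) := by
  unfold ent; exact finsum_eq_sum_of_fintype _

lemma isDist_iff [Fintype A] (p : A → ℝ) : IsDist p ↔ (∀ a, 0 ≤ p a) ∧ ∑ a, p a = 1 := by
  unfold IsDist; rw [finsum_eq_sum_of_fintype]

open Classical in
lemma push_apply [Fintype A] (f : A → B) (p : A → ℝ) (b : B) :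
    push f p b = ∑ a, if f a = b then p a else 0 := by
  unfold push
  rw [finsum_mem_def, finsum_eq_sum_of_fintype]
  apply Finset.sum_congr rfl
  intro a _
  simp [Set.indicator]

lemma sum_push [Fintype A] [Fintype B] (f : A → B) (p : A → ℝ) (g : B → ℝ) :
    ∑ b, push f p b * g b = ∑ a, p a * g (f a) := by
  classical
  simp_rw [push_apply, Finset.sum_mul]
  rw [Finset.sum_comm]
  apply Finset.sum_congr rfl
  intro a _
  rw [Finset.sum_eq_single (f a)]
  · simp
  · intro b _ hb
    rw [if_neg (fun h => hb h.symm), zero_mul]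
  · simp

lemma push_nonneg [Finite A] (f : A → B) {p : A → ℝ} (hp : ∀ a, 0 ≤ p a) (b : B) :
    0 ≤ push f p b := by
  classical
  have := Fintype.ofFinite A
  rw [push_apply]
  apply Finset.sum_nonneg
  intro a _
  split_ifs
  · exact hp a
  · exact le_rfl

lemma le_push [Finite A] (f : A → B) {p : A → ℝ} (hp : ∀ a, 0 ≤ p a) (a : A) :
    p a ≤ push f p (f a) := by
  classical
  have := Fintype.ofFinite A
  rw [push_apply]
  have := Finset.single_le_sum (f := fun a' => if f a' = f a then p a' else 0)
    (fun i _ => by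
      show 0 ≤ (if f i = f a then p i else 0)
      split_ifs
      · exact hp i
      · exact le_rfl) (Finset.mem_univ a)
  simpa using this

lemma isDist_push [Finite A] [Finite B] (f : A → B) {p : A → ℝ} (hp : IsDist p) :
    IsDist (push f p) := by
  have := Fintype.ofFinite A
  have := Fintype.ofFinite B
  rw [isDist_iff] at *
  refine ⟨push_nonneg f hp.1, ?_⟩
  have := sum_push f p (fun _ => 1)
  simpa [hp.2] using this

lemma push_push [Finite A] [Finite B] (f : A → B) (g : B → C) (p : A → ℝ) :
    push g (push f p) = push (fun a => g (f a)) p := by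
  classical
  have := Fintype.ofFinite A
  have := Fintype.ofFinite B
  funext c
  rw [push_apply, push_apply]
  have := sum_push f p (fun b => if g b = c then 1 else 0)
  simpa using this

lemma ent_push_eq [Fintype A] [Fintype B] (f : A → B) (p : A → ℝ) :
    ent (push f p) = ∑ a, p a * (-Real.log (push f p (f a))) := by
  rw [ent_eq_sum, ← sum_push f p (fun b => -Real.log (push f p b))]
  apply Finset.sum_congr rfl
  intro b _
  simp [Real.negMulLog]

lemma ent_push_le [Finite A] [Finite B] (f : A → B) {p : A → ℝ} (hp : ∀ a, 0 ≤ p a) :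
    ent (push f p) ≤ ent p := by
  have := Fintype.ofFinite A
  have := Fintype.ofFinite B
  rw [ent_push_eq, ent_eq_sum]
  apply Finset.sum_le_sum
  intro a _
  rcases (hp a).eq_or_lt with h | h
  · simp [← h]
  · have := Real.log_le_log h (le_push f hp a)
    unfold Real.negMulLog
    nlinarith

lemma ent_nonneg [Finite A] {p : A → ℝ} (hp : IsDist p) : 0 ≤ ent p := by
  have := Fintype.ofFinite A
  rw [isDist_iff] at hp
  rw [ent_eq_sum]
  apply Finset.sum_nonneg
  intro a _
  apply Real.negMulLog_nonneg (hp.1 a)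
  rw [← hp.2]
  exact Finset.single_le_sum (fun i _ => hp.1 i) (Finset.mem_univ a)

/-- Entropy of the random variable `f` on the finite probability space `(Ω, μ)`. -/
def HH (μ : Ω → ℝ) (f : Ω → A) : ℝ := ent (push f μ)

lemma HH_le [Finite Ω] [Finite A] [Finite B] {μ : Ω → ℝ} (hμ : IsDist μ) (f : Ω → A) (g : Ω → B)
    (h : ∀ w w', f w = f w' → g w = g w') : HH μ g ≤ HH μ f := by
  have hne : Nonempty Ω := by
    by_contra hn
    rw [not_nonempty_iff] at hn
    have := Fintype.ofFinite Ω
    rw [isDist_iff] at hμ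
    simpa using hμ.2
  obtain ⟨w0⟩ := hne
  have hb : Nonempty B := ⟨g w0⟩
  have hf : Function.FactorsThrough g f := fun a b hab => h a b hab
  obtain ⟨φ, hφ⟩ := (Function.factorsThrough_iff g).1 hf
  have : push g μ = push φ (push f μ) := by
    rw [push_push, hφ]; rfl
  unfold HH
  rw [this]
  exact ent_push_le φ (push_nonneg f hμ.1)

lemma HH_eq [Finite Ω] [Finite A] [Finite B] {μ : Ω → ℝ} (hμ : IsDist μ) (f : Ω → A) (g : Ω → B)
    (h : ∀ w w', f w = f w' ↔ g w = g w') : HH μ f = HH μ g :=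
  le_antisymm (HH_le hμ _ _ fun w w' => (h w w').2) (HH_le hμ _ _ fun w w' => (h w w').1)

lemma HH_push [Finite Ω] [Finite A] (μ : Ω → ℝ) (f : Ω → A) (g : A → B) :
    HH (push f μ) g = HH μ (fun w => g (f w)) := by
  unfold HH; rw [push_push]

lemma push_id [Finite A] (p : A → ℝ) : push (fun a => a) p = p := by
  classical
  have := Fintype.ofFinite A
  funext a
  rw [push_apply]; simp

lemma HH_id [Finite A] (p : A → ℝ) : HH p (fun a => a) = ent p := by
  unfold HH; rw [push_id]

lemma ent_submod [Finite A] [Finite B] [Finite C] {r : A × B × C → ℝ} (hr : ∀ z, 0 ≤ r z) :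
    ent r + ent (push (fun z => z.2.2) r) ≤
      ent (push (fun z => (z.1, z.2.2)) r) + ent (push (fun z => z.2) r) := by
  classical
  have := Fintype.ofFinite A
  have := Fintype.ofFinite B
  have := Fintype.ofFinite C
  set r13 := push (fun z : A × B × C => (z.1, z.2.2)) r with h13
  set r23 := push (fun z : A × B × C => z.2) r with h23
  set r3 := push (fun z : A × B × C => z.2.2) r with h3
  have e13 : ∀ a c, r13 (a, c) = ∑ b, r (a, b, c) := by
    intro a c
    rw [h13, push_apply, Fintype.sum_prod_type]
    rw [Finset.sum_eq_single a]
    · rw [Fintype.sum_prod_type]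
      apply Finset.sum_congr rfl
      intro b _
      simp
    · intro a' _ ha'
      simp [ha']
    · simp
  have e23 : ∀ b c, r23 (b, c) = ∑ a, r (a, b, c) := by
    intro b c
    rw [h23, push_apply, Fintype.sum_prod_type]
    apply Finset.sum_congr rfl
    intro a _
    rw [Finset.sum_eq_single (b, c)]
    · simp
    · intro x _ hx
      simp [hx]
    · simp
  have e3 : ∀ c, r3 c = ∑ a, ∑ b, r (a, b, c) := by
    intro c
    rw [h3, push_apply, Fintype.sum_prod_type]
    apply Finset.sum_congr rfl
    intro a _
    rw [Fintype.sum_prod_type]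
    apply Finset.sum_congr rfl
    intro b _
    simp
  have swap : ∀ F : A → B → C → ℝ, ∑ a, ∑ b, ∑ c, F a b c = ∑ c, ∑ a, ∑ b, F a b c := by
    intro F
    calc ∑ a, ∑ b, ∑ c, F a b c = ∑ a, ∑ c, ∑ b, F a b c :=
          Finset.sum_congr rfl (fun a _ => Finset.sum_comm)
      _ = ∑ c, ∑ a, ∑ b, F a b c := Finset.sum_comm
  have hsum : ∑ z : A × B × C, r13 (z.1, z.2.2) * r23 z.2 / r3 z.2.2 = ∑ z, r z := by
    have h1 : ∑ z : A × B × C, r13 (z.1, z.2.2) * r23 z.2 / r3 z.2.2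
        = ∑ c, (∑ a, r13 (a, c)) * (∑ b, r23 (b, c)) / r3 c := by
      simp_rw [Fintype.sum_prod_type, Finset.sum_mul_sum, Finset.sum_div]
      exact swap _
    have h2 : ∑ z, r z = ∑ c, r3 c := by
      simp_rw [e3, Fintype.sum_prod_type]
      exact swap _
    rw [h1, h2]
    apply Finset.sum_congr rfl
    intro c _
    have s1 : ∑ a, r13 (a, c) = r3 c := by simp_rw [e13, e3]
    have s2 : ∑ b, r23 (b, c) = r3 c := by
      simp_rw [e23, e3]; rw [Finset.sum_comm]
    rw [s1, s2]
    by_cases h : r3 c = 0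
    · simp [h]
    · field_simp
  have key : ∀ z : A × B × C, r z - r13 (z.1, z.2.2) * r23 z.2 / r3 z.2.2 ≤
      r z * (Real.log (r z) + Real.log (r3 z.2.2) - Real.log (r13 (z.1, z.2.2))
        - Real.log (r23 z.2)) := by
    intro z
    have p13 : 0 ≤ r13 (z.1, z.2.2) := push_nonneg _ hr _
    have p23 : 0 ≤ r23 z.2 := push_nonneg _ hr _
    have p3 : 0 ≤ r3 z.2.2 := push_nonneg _ hr _
    rcases (hr z).eq_or_lt with h | h
    · rw [← h]
      have : 0 ≤ r13 (z.1, z.2.2) * r23 z.2 / r3 z.2.2 := by positivity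
      linarith
    · have q13 : 0 < r13 (z.1, z.2.2) :=
        h.trans_le (le_push (fun z : A × B × C => (z.1, z.2.2)) hr z)
      have q23 : 0 < r23 z.2 := h.trans_le (le_push (fun z : A × B × C => z.2) hr z)
      have q3 : 0 < r3 z.2.2 := h.trans_le (le_push (fun z : A × B × C => z.2.2) hr z)
      have hl := Real.log_le_sub_one_of_pos (x := r13 (z.1, z.2.2) * r23 z.2 / (r3 z.2.2 * r z))
        (by positivity)
      rw [Real.log_div (by positivity) (by positivity), Real.log_mul q13.ne' q23.ne',
        Real.log_mul q3.ne' h.ne'] at hl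
      have h4 : r13 (z.1, z.2.2) * r23 z.2 / r3 z.2.2
          = r z * (r13 (z.1, z.2.2) * r23 z.2 / (r3 z.2.2 * r z)) := by
        field_simp
      rw [h4]
      nlinarith
  have hfin := Finset.sum_le_sum (fun z (_ : z ∈ Finset.univ) => key z)
  rw [Finset.sum_sub_distrib, hsum, sub_self] at hfin
  rw [h13, h23, h3, ent_push_eq, ent_push_eq, ent_push_eq, ent_eq_sum, ← h13, ← h23, ← h3]
  have : ∑ z, r z * (Real.log (r z) + Real.log (r3 z.2.2) - Real.log (r13 (z.1, z.2.2))
        - Real.log (r23 z.2)) = ∑ z, r z * (-Real.log (r13 (z.1, z.2.2)))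
        + ∑ z, r z * (-Real.log (r23 z.2)) - ∑ z, Real.negMulLog (r z)
        - ∑ z, r z * (-Real.log (r3 z.2.2)) := by
    rw [← Finset.sum_add_distrib, ← Finset.sum_sub_distrib, ← Finset.sum_sub_distrib]
    apply Finset.sum_congr rfl
    intro z _
    unfold Real.negMulLog
    ring
  linarith

lemma HH_submod [Finite Ω] [Finite A] [Finite B] [Finite C] {μ : Ω → ℝ} (hμ : IsDist μ)
    (f : Ω → A) (g : Ω → B) (h : Ω → C) :
    HH μ (fun w => (f w, g w, h w)) + HH μ h ≤
      HH μ (fun w => (f w, h w)) + HH μ (fun w => (g w, h w)) := by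
  have := ent_submod (r := push (fun w => (f w, g w, h w)) μ) (push_nonneg _ hμ.1)
  rw [push_push, push_push, push_push] at this
  exact this

/-- Subadditivity. -/
lemma HH_subadd [Finite Ω] [Finite A] [Finite B] {μ : Ω → ℝ} (hμ : IsDist μ)
    (f : Ω → A) (g : Ω → B) :
    HH μ (fun w => (f w, g w)) + HH μ (fun _ => ()) ≤ HH μ f + HH μ g := by
  have h := HH_submod hμ f g (fun _ => ())
  have h1 := HH_eq hμ (fun w => (f w, g w, ())) (fun w => (f w, g w)) (by simp)
  have h2 := HH_eq hμ (fun w => (f w, ())) f (by simp)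
  have h3 := HH_eq hμ (fun w => (g w, ())) g (by simp)
  linarith

lemma isDist_prod [Finite A] [Finite B] {p : A → ℝ} {q : B → ℝ} (hp : IsDist p) (hq : IsDist q) :
    IsDist (prodDist p q) := by
  have := Fintype.ofFinite A
  have := Fintype.ofFinite B
  rw [isDist_iff] at *
  refine ⟨fun z => mul_nonneg (hp.1 _) (hq.1 _), ?_⟩
  unfold prodDist
  rw [Fintype.sum_prod_type]
  simp_rw [← Finset.mul_sum, hq.2, mul_one, hp.2]

/-- Chain rule for a family of distributions. -/
lemma ent_family [Fintype A] [Fintype B] {c : A → ℝ} {P : A → B → ℝ}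
    (hP : ∀ a, IsDist (P a)) :
    ent (fun z : A × B => c z.1 * P z.1 z.2) = ent c + ∑ a, c a * ent (P a) := by
  rw [ent_eq_sum, ent_eq_sum, Fintype.sum_prod_type, ← Finset.sum_add_distrib]
  apply Finset.sum_congr rfl
  intro a _
  simp_rw [Real.negMulLog_mul]
  rw [Finset.sum_add_distrib, ← Finset.sum_mul, ← Finset.mul_sum, ((isDist_iff _).1 (hP a)).2,
    one_mul, ent_eq_sum]

lemma isDist_family [Fintype A] [Fintype B] {c : A → ℝ} {P : A → B → ℝ} (hc : IsDist c)
    (hP : ∀ a, IsDist (P a)) : IsDist (fun z : A × B => c z.1 * P z.1 z.2) := by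
  rw [isDist_iff] at *
  refine ⟨fun z => mul_nonneg (hc.1 _) ((hP _).1 _), ?_⟩
  rw [Fintype.sum_prod_type]
  simp_rw [← Finset.mul_sum, ((isDist_iff _).1 (hP _)).2, mul_one, hc.2]

lemma ent_prod [Finite A] [Finite B] {p : A → ℝ} {q : B → ℝ} (hp : IsDist p) (hq : IsDist q) :
    ent (prodDist p q) = ent p + ent q := by
  have := Fintype.ofFinite A
  have := Fintype.ofFinite B
  have := ent_family (c := p) (P := fun _ => q) (fun _ => hq)
  unfold prodDist
  rw [this, ← Finset.sum_mul, ((isDist_iff _).1 hp).2, one_mul]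

lemma push_prod [Finite A] [Finite B] {A' B' : Type*} (f : A → A') (g : B → B')
    (p : A → ℝ) (q : B → ℝ) :
    push (fun z : A × B => (f z.1, g z.2)) (prodDist p q) = prodDist (push f p) (push g q) := by
  classical
  have := Fintype.ofFinite A
  have := Fintype.ofFinite B
  funext z
  unfold prodDist
  rw [push_apply, push_apply, push_apply, Fintype.sum_prod_type, Finset.sum_mul_sum]
  apply Finset.sum_congr rfl; intro a _
  apply Finset.sum_congr rfl; intro b _
  obtain ⟨z1, z2⟩ := z
  by_cases h1 : f a = z1 <;> by_cases h2 : g b = z2 <;> simp [h1, h2]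

lemma HH_prod [Finite A] [Finite B] {A' B' : Type*} [Finite A'] [Finite B'] (f : A → A')
    (g : B → B') {p : A → ℝ} {q : B → ℝ} (hp : IsDist p) (hq : IsDist q) :
    HH (prodDist p q) (fun z => (f z.1, g z.2)) = HH p f + HH q g := by
  unfold HH
  rw [push_prod, ent_prod (isDist_push f hp) (isDist_push g hq)]

lemma push_equiv [Finite A] (e : A ≃ B) (p : A → ℝ) : push (fun a => e a) p = fun b => p (e.symm b) := by
  classical
  have := Fintype.ofFinite A
  funext b
  rw [push_apply]
  rw [Finset.sum_eq_single (e.symm b)]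
  · simp
  · intro a _ ha
    rw [if_neg]
    rintro rfl
    simp at ha
  · simp

lemma HH_unit [Finite Ω] {μ : Ω → ℝ} (hμ : IsDist μ) : HH μ (fun _ => ()) = 0 := by
  have h := isDist_push (fun _ => ()) hμ
  unfold HH
  rw [isDist_iff] at h
  have h2 := h.2
  simp at h2
  rw [ent_eq_sum]
  simp [h2]

lemma exists_disint [Fintype A] [Fintype B] {r : A × B → ℝ} (hr : IsDist r) :
    ∃ P : A → B → ℝ, (∀ a, IsDist (P a)) ∧ ∀ z, r z = push Prod.fst r z.1 * P z.1 z.2 := by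
  classical
  have hfst : ∀ a, push Prod.fst r a = ∑ b, r (a, b) := by
    intro a
    rw [push_apply, Fintype.sum_prod_type, Finset.sum_eq_single a]
    · simp
    · intro a' _ h; simp [h]
    · simp
  refine ⟨fun a => if push Prod.fst r a = 0 then push Prod.snd r else
    fun b => r (a, b) / push Prod.fst r a, ?_, ?_⟩
  · intro a
    dsimp only
    split_ifs with h
    · exact isDist_push _ hr
    · rw [isDist_iff]
      refine ⟨fun b => div_nonneg (hr.1 _) (push_nonneg _ hr.1 _), ?_⟩
      rw [← Finset.sum_div, ← hfst, div_self h]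
  · rintro ⟨a, b⟩
    dsimp only
    split_ifs with h
    · rw [h, zero_mul]
      rw [hfst, Finset.sum_eq_zero_iff_of_nonneg (fun i _ => hr.1 _)] at h
      exact h b (Finset.mem_univ b)
    · field_simp

lemma exists_le_avg [Fintype A] {c : A → ℝ} (hc : IsDist c) {f : A → ℝ} {t : ℝ}
    (h : ∑ a, c a * f a ≤ t) : ∃ a, f a ≤ t := by
  by_contra hn
  push Not at hn
  rw [isDist_iff] at hc
  have h1 : ∑ a, c a * t < ∑ a, c a * f a := by
    apply Finset.sum_lt_sum
    · intro a _
      exact mul_le_mul_of_nonneg_left (hn a).le (hc.1 a)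
    · by_contra h0
      push Not at h0
      have : ∀ a, c a = 0 := by
        intro a
        have := h0 a (Finset.mem_univ a)
        by_contra h2
        have h3 : 0 < c a := lt_of_le_of_ne (hc.1 a) (Ne.symm h2)
        have := hn a
        nlinarith
      have := hc.2
      simp_all
  rw [← Finset.sum_mul, hc.2, one_mul] at h1
  linarith

lemma exists_ge_avg [Fintype A] {c : A → ℝ} (hc : IsDist c) {f : A → ℝ} {t : ℝ}
    (h : t ≤ ∑ a, c a * f a) : ∃ a, t ≤ f a := by
  obtain ⟨a, ha⟩ := exists_le_avg hc (f := fun a => - f a) (t := -t) (by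
    simp only [mul_neg, Finset.sum_neg_distrib]; linarith)
  exact ⟨a, by linarith⟩

end basics

end DS

/-! Part 2: sums of independent variables, and the fibring package. -/

namespace DS

section families

variable {A B C : Type*}

/-- Joint law of `(a, b)` where `a ∼ c` and `b ∼ P a` given `a`. -/
def fam (c : A → ℝ) (P : A → B → ℝ) : A × B → ℝ := fun z => c z.1 * P z.1 z.2

/-- Mixture of distributions. -/
def mix [Fintype A] (c : A → ℝ) (P : A → B → ℝ) : B → ℝ := fun b => ∑ a, c a * P a b

lemma ent_fam [Fintype A] [Finite B] {c : A → ℝ} {P : A → B → ℝ}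
    (hP : ∀ a, IsDist (P a)) : ent (fam c P) = ent c + ∑ a, c a * ent (P a) := by
  have := Fintype.ofFinite B
  exact ent_family hP

lemma isDist_fam [Finite A] [Finite B] {c : A → ℝ} {P : A → B → ℝ} (hc : IsDist c)
    (hP : ∀ a, IsDist (P a)) : IsDist (fam c P) := by
  have := Fintype.ofFinite A
  have := Fintype.ofFinite B
  exact isDist_family hc hP

lemma push_fam [Finite A] [Finite B] (c : A → ℝ) (P : A → B → ℝ) (f : A → B → C) :
    push (fun z : A × B => (z.1, f z.1 z.2)) (fam c P) = fam c (fun a => push (f a) (P a)) := by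
  classical
  have := Fintype.ofFinite A
  have := Fintype.ofFinite B
  funext z
  obtain ⟨a, x⟩ := z
  unfold fam
  rw [push_apply, Fintype.sum_prod_type, Finset.sum_eq_single a]
  · dsimp only
    rw [push_apply, Finset.mul_sum]
    apply Finset.sum_congr rfl
    intro b _
    by_cases h : f a b = x <;> simp [h]
  · intro a' _ h
    simp [h]
  · simp

lemma push_fst_fam [Finite A] [Finite B] (c : A → ℝ) {P : A → B → ℝ} (hP : ∀ a, IsDist (P a)) :
    push Prod.fst (fam c P) = c := by
  classical
  have := Fintype.ofFinite A
  have := Fintype.ofFinite B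
  funext a
  unfold fam
  rw [push_apply, Fintype.sum_prod_type, Finset.sum_eq_single a]
  · simp [← Finset.mul_sum, ((isDist_iff _).1 (hP a)).2]
  · intro a' _ h
    simp [h]
  · simp

lemma push_snd_fam [Fintype A] [Finite B] (c : A → ℝ) (P : A → B → ℝ) :
    push Prod.snd (fam c P) = mix c P := by
  classical
  have := Fintype.ofFinite B
  funext b
  unfold fam mix
  rw [push_apply, Fintype.sum_prod_type]
  apply Finset.sum_congr rfl
  intro a _
  simp

lemma prodDist_eq_fam (p : A → ℝ) (q : B → ℝ) : prodDist p q = fam p (fun _ => q) := rfl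

lemma push_fst_prod [Finite A] [Finite B] (p : A → ℝ) {q : B → ℝ} (hq : IsDist q) :
    push Prod.fst (prodDist p q) = p := push_fst_fam p (fun _ => hq)

lemma push_snd_prod [Finite A] [Finite B] {p : A → ℝ} (hp : IsDist p) (q : B → ℝ) :
    push Prod.snd (prodDist p q) = q := by
  have := Fintype.ofFinite A
  rw [prodDist_eq_fam, push_snd_fam]
  funext b
  unfold mix
  rw [← Finset.sum_mul, ((isDist_iff _).1 hp).2, one_mul]

lemma isDist_mix [Fintype A] [Finite B] {c : A → ℝ} {P : A → B → ℝ} (hc : IsDist c)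
    (hP : ∀ a, IsDist (P a)) : IsDist (mix c P) := by
  rw [← push_snd_fam]; exact isDist_push _ (isDist_fam hc hP)

/-- Concavity of entropy. -/
lemma avg_ent_le_mix [Fintype A] [Finite B] {c : A → ℝ} {P : A → B → ℝ} (hc : IsDist c)
    (hP : ∀ a, IsDist (P a)) : ∑ a, c a * ent (P a) ≤ ent (mix c P) := by
  have hd := isDist_fam hc hP
  have h := HH_subadd hd Prod.fst Prod.snd
  rw [HH_unit hd] at h
  have h1 : HH (fam c P) (fun w => (w.1, w.2)) = ent (fam c P) := HH_id _
  have h2 : HH (fam c P) Prod.fst = ent c := by unfold HH; rw [push_fst_fam c hP]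
  have h3 : HH (fam c P) Prod.snd = ent (mix c P) := by unfold HH; rw [push_snd_fam]
  have h4 := ent_fam (c := c) hP
  linarith

/-- Conditioning on the fibre index reduces `H[Y | φ(Y)]`. -/
lemma avg_drop_le [Fintype A] [Finite B] [Finite C] {c : A → ℝ} {P : A → B → ℝ} (hc : IsDist c)
    (hP : ∀ a, IsDist (P a)) (φ : B → C) :
    ∑ a, c a * (ent (P a) - ent (push φ (P a))) ≤ ent (mix c P) - ent (push φ (mix c P)) := by
  have hd := isDist_fam hc hP
  have h := HH_submod hd Prod.fst Prod.snd (fun z => φ z.2)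
  have h1 : HH (fam c P) (fun w => (w.1, w.2, φ w.2)) = ent (fam c P) := by
    rw [← HH_id (fam c P)]
    apply HH_eq hd
    rintro ⟨a, b⟩ ⟨a', b'⟩
    simp only [Prod.mk.injEq]
    constructor
    · rintro ⟨h1, h2, -⟩; exact ⟨h1, h2⟩
    · rintro ⟨rfl, rfl⟩; simp
  have h2 : HH (fam c P) (fun z => φ z.2) = ent (push φ (mix c P)) := by
    unfold HH; rw [← push_snd_fam, push_push]
  have h3 : HH (fam c P) (fun z => (z.1, φ z.2)) = ent c + ∑ a, c a * ent (push φ (P a)) := by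
    unfold HH
    rw [push_fam c P (fun _ => φ), ent_fam (fun a => isDist_push φ (hP a))]
  have h4 : HH (fam c P) (fun z => (z.2, φ z.2)) = ent (mix c P) := by
    rw [← push_snd_fam]
    apply HH_eq hd
    rintro ⟨a, b⟩ ⟨a', b'⟩
    simp only [Prod.mk.injEq]
    constructor
    · rintro ⟨h1, -⟩; exact h1
    · rintro rfl; simp
  have h5 := ent_fam (c := c) hP
  simp_rw [mul_sub, Finset.sum_sub_distrib]
  linarith

lemma sum_prod_fst [Fintype A] [Fintype B] {p : A → ℝ} {q : B → ℝ} (hq : IsDist q) (F : A → ℝ) :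
    ∑ z : A × B, prodDist p q z * F z.1 = ∑ a, p a * F a := by
  have := sum_push Prod.fst (prodDist p q) F
  rw [push_fst_prod p hq] at this
  exact this.symm

lemma sum_prod_snd [Fintype A] [Fintype B] {p : A → ℝ} {q : B → ℝ} (hp : IsDist p) (F : B → ℝ) :
    ∑ z : A × B, prodDist p q z * F z.2 = ∑ b, q b * F b := by
  have := sum_push Prod.snd (prodDist p q) F
  rw [push_snd_prod hp q] at this
  exact this.symm

lemma sum_dist_mono [Fintype A] {c : A → ℝ} (hc : IsDist c) {f g : A → ℝ} (h : ∀ a, f a ≤ g a) :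
    ∑ a, c a * f a ≤ ∑ a, c a * g a :=
  Finset.sum_le_sum fun a _ => mul_le_mul_of_nonneg_left (h a) (hc.1 a)

lemma sum_dist_const [Fintype A] {c : A → ℝ} (hc : IsDist c) (t : ℝ) : ∑ a, c a * t = t := by
  rw [← Finset.sum_mul, ((isDist_iff _).1 hc).2, one_mul]

end families

section groups

variable {G G' : Type} [AddCommGroup G] [Finite G] [AddCommGroup G'] [Finite G']

lemma conv_eq_push (p q : G → ℝ) : conv p q = push (fun z => z.1 + z.2) (prodDist p q) := by
  classical
  have := Fintype.ofFinite G
  funext z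
  unfold conv prodDist
  rw [push_apply, finsum_eq_sum_of_fintype, Fintype.sum_prod_type]
  apply Finset.sum_congr rfl
  intro x _
  rw [Finset.sum_eq_single (z - x)]
  · simp
  · intro y _ hy
    rw [if_neg]
    rintro rfl
    simp at hy
  · simp

lemma isDist_conv {p q : G → ℝ} (hp : IsDist p) (hq : IsDist q) : IsDist (conv p q) := by
  rw [conv_eq_push]; exact isDist_push _ (isDist_prod hp hq)

lemma push_swap {A B : Type*} [Finite A] [Finite B] (p : A → ℝ) (q : B → ℝ) :
    push (fun z : A × B => (z.2, z.1)) (prodDist p q) = prodDist q p := by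
  have := push_equiv (Equiv.prodComm A B) (prodDist p q)
  have h2 : (fun a => (Equiv.prodComm A B) a) = (fun z : A × B => (z.2, z.1)) := by
    funext z; rfl
  rw [h2] at this
  rw [this]
  funext z
  simp [prodDist, mul_comm]

lemma conv_comm (p q : G → ℝ) : conv p q = conv q p := by
  rw [conv_eq_push, conv_eq_push, ← push_swap p q, push_push]
  simp_rw [add_comm]

lemma push_conv {F : Type*} [FunLike F G G'] [AddMonoidHomClass F G G'] (φ : F) (p q : G → ℝ) :
    push φ (conv p q) = conv (push φ p) (push φ q) := by
  rw [conv_eq_push, conv_eq_push, ← push_prod, push_push, push_push]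
  simp_rw [map_add]

lemma conv_assoc (p q r : G → ℝ) : conv (conv p q) r = conv p (conv q r) := by
  have h1 : conv (conv p q) r =
      push (fun z : (G × G) × G => z.1.1 + z.1.2 + z.2) (prodDist (prodDist p q) r) := by
    have := push_prod (fun z : G × G => z.1 + z.2) (fun z : G => z) (prodDist p q) r
    rw [push_id, ← conv_eq_push] at this
    rw [conv_eq_push (conv p q) r, ← this, push_push]
  have h2 : conv p (conv q r) =
      push (fun z : G × (G × G) => z.1 + (z.2.1 + z.2.2)) (prodDist p (prodDist q r)) := by
    have := push_prod (fun z : G => z) (fun z : G × G => z.1 + z.2) p (prodDist q r)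
    rw [push_id, ← conv_eq_push] at this
    rw [conv_eq_push p (conv q r), ← this, push_push]
  have h3 : prodDist p (prodDist q r) =
      push (fun z : (G × G) × G => (Equiv.prodAssoc G G G) z) (prodDist (prodDist p q) r) := by
    rw [push_equiv]
    funext z
    simp [prodDist, mul_assoc]
  rw [h1, h2, h3, push_push]
  simp [add_assoc]

lemma conv_mix {B : Type*} [Fintype B] (c : B → ℝ) (P : B → G → ℝ) (t : G → ℝ) :
    conv (mix c P) t = mix c (fun b => conv (P b) t) := by
  have := Fintype.ofFinite G
  funext z
  unfold conv mix
  simp_rw [finsum_eq_sum_of_fintype, Finset.mul_sum, Finset.sum_mul]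
  rw [Finset.sum_comm]
  simp_rw [mul_assoc]

lemma ent_conv_eq (p q : G → ℝ) : ent (conv p q) = HH (prodDist p q) (fun z => z.1 + z.2) := by
  rw [conv_eq_push]; rfl

lemma ent_le_conv_right {p q : G → ℝ} (hp : IsDist p) (hq : IsDist q) :
    ent q ≤ ent (conv p q) := by
  have hd := isDist_prod hp hq
  have h := HH_subadd hd Prod.fst (fun z => z.1 + z.2)
  rw [HH_unit hd, ← ent_conv_eq] at h
  have h1 : HH (prodDist p q) (fun w => (w.1, w.1 + w.2)) = ent (prodDist p q) := by
    rw [← HH_id (prodDist p q)]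
    apply HH_eq hd
    rintro ⟨a, b⟩ ⟨a', b'⟩
    simp only [Prod.mk.injEq]
    constructor
    · rintro ⟨rfl, h2⟩; simpa using h2
    · rintro ⟨rfl, rfl⟩; simp
  have h2 : HH (prodDist p q) Prod.fst = ent p := by unfold HH; rw [push_fst_prod p hq]
  rw [ent_prod hp hq] at h1
  linarith

lemma ent_le_conv_left {p q : G → ℝ} (hp : IsDist p) (hq : IsDist q) :
    ent p ≤ ent (conv p q) := by
  rw [conv_comm]; exact ent_le_conv_right hq hp

lemma ent_conv_le {p q : G → ℝ} (hp : IsDist p) (hq : IsDist q) :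
    ent (conv p q) ≤ ent p + ent q := by
  rw [← ent_prod hp hq, conv_eq_push]
  exact ent_push_le _ (isDist_prod hp hq).1

/-- Kaimanovich, Vershik, Madiman submodularity. -/
lemma ent_kv {p q r : G → ℝ} (hp : IsDist p) (hq : IsDist q) (hr : IsDist r) :
    ent (conv (conv p q) r) + ent q ≤ ent (conv p q) + ent (conv q r) := by
  have hqr := isDist_prod hq hr
  have hd := isDist_prod hp hqr
  set μ := prodDist p (prodDist q r) with hμ
  have h := HH_submod hd (fun z => z.1) (fun z => z.2.2) (fun z => z.1 + (z.2.1 + z.2.2))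
  have h1 : HH μ (fun z => (z.1, z.2.2, z.1 + (z.2.1 + z.2.2))) = ent p + (ent q + ent r) := by
    rw [← ent_prod hq hr, ← ent_prod hp hqr, ← HH_id (prodDist p (prodDist q r))]
    apply HH_eq hd
    rintro ⟨a, b, c⟩ ⟨a', b', c'⟩
    simp only [Prod.mk.injEq]
    constructor
    · rintro ⟨rfl, rfl, h⟩; simpa using h
    · rintro ⟨rfl, rfl, rfl⟩; simp
  have h2 : HH μ (fun z => z.1 + (z.2.1 + z.2.2)) = ent (conv (conv p q) r) := by
    rw [conv_assoc]
    have := push_prod (fun z : G => z) (fun z : G × G => z.1 + z.2) p (prodDist q r)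
    rw [push_id, ← conv_eq_push] at this
    rw [conv_eq_push p (conv q r), ← this, push_push]
    rfl
  have h3 : HH μ (fun z => (z.1, z.1 + (z.2.1 + z.2.2))) = ent p + ent (conv q r) := by
    rw [ent_conv_eq, ← HH_id p, ← HH_prod _ _ hp hqr]
    apply HH_eq hd
    rintro ⟨a, b, c⟩ ⟨a', b', c'⟩
    simp only [Prod.mk.injEq]
    constructor
    · rintro ⟨rfl, h⟩; simpa using h
    · rintro ⟨rfl, h⟩; simp [h]
  have h4 : HH μ (fun z => (z.2.2, z.1 + (z.2.1 + z.2.2))) = ent (conv p q) + ent r := by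
    have e : prodDist (prodDist p q) r =
        push (fun z : G × (G × G) => (Equiv.prodAssoc G G G).symm z) μ := by
      rw [push_equiv]
      funext z
      simp [prodDist, mul_assoc, hμ]
    rw [ent_conv_eq, ← HH_id r, ← HH_prod _ _ (isDist_prod hp hq) hr, e, HH_push]
    apply HH_eq hd
    rintro ⟨a, b, c⟩ ⟨a', b', c'⟩
    simp only [Prod.mk.injEq, Equiv.prodAssoc_symm_apply, ← add_assoc]
    constructor
    · rintro ⟨rfl, h⟩; simpa using h
    · rintro ⟨h, rfl⟩; simp [h]
  linarith

/-- Projection: `H[X+Y | φ(X+Y)] ≥ H[X | φ(X)]`. -/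
lemma ent_proj {F : Type*} [FunLike F G G'] [AddMonoidHomClass F G G'] (φ : F) {p q : G → ℝ}
    (hp : IsDist p) (hq : IsDist q) :
    ent p + ent (conv (push φ p) (push φ q)) ≤ ent (conv p q) + ent (push φ p) := by
  have hd := isDist_prod hp hq
  have h := HH_submod hd (fun z => z.1 + z.2) (fun z => z.2) (fun z => φ (z.1 + z.2))
  have h1 : HH (prodDist p q) (fun z => (z.1 + z.2, z.2, φ (z.1 + z.2))) = ent p + ent q := by
    rw [← ent_prod hp hq, ← HH_id (prodDist p q)]
    apply HH_eq hd
    rintro ⟨a, b⟩ ⟨a', b'⟩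
    simp only [Prod.mk.injEq]
    constructor
    · rintro ⟨h, rfl, -⟩; simpa using h
    · rintro ⟨rfl, rfl⟩; simp
  have h2 : HH (prodDist p q) (fun z => φ (z.1 + z.2)) = ent (conv (push φ p) (push φ q)) := by
    rw [← push_conv, conv_eq_push, push_push]; rfl
  have h3 : HH (prodDist p q) (fun z => (z.1 + z.2, φ (z.1 + z.2))) = ent (conv p q) := by
    rw [ent_conv_eq]
    apply HH_eq hd
    rintro ⟨a, b⟩ ⟨a', b'⟩
    simp only [Prod.mk.injEq]
    constructor
    · rintro ⟨h, -⟩; exact h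
    · intro h; simp [h]
  have h4 : HH (prodDist p q) (fun z => (z.2, φ (z.1 + z.2))) = ent (push φ p) + ent q := by
    have : ent (push φ p) = HH p φ := rfl
    rw [this, ← HH_id q, ← HH_prod _ _ hp hq]
    apply HH_eq hd
    rintro ⟨a, b⟩ ⟨a', b'⟩
    simp only [Prod.mk.injEq, map_add]
    constructor
    · rintro ⟨rfl, h⟩; simpa using h
    · rintro ⟨h, rfl⟩; simp [h]
  linarith

end groups

end DS

/-! Part 3: the fibring package. -/

namespace DS

set_option linter.unusedSectionVars false

section package

variable {G : Type} [AddCommGroup G] [Module (ZMod 2) G] [Fintype G]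

lemma fibre1 {p : G → ℝ} (hp : IsDist p) :
    ∃ P : G → G → ℝ, (∀ u, IsDist (P u)) ∧
      fam (conv p p) P = push (fun z : G × G => (z.1 + z.2, z.1)) (prodDist p p) := by
  have hr : IsDist (push (fun z : G × G => (z.1 + z.2, z.1)) (prodDist p p)) :=
    isDist_push _ (isDist_prod hp hp)
  obtain ⟨P, hP, h⟩ := exists_disint hr
  refine ⟨P, hP, ?_⟩
  funext z
  rw [h z, push_push]
  unfold fam
  rw [conv_eq_push]

lemma fibre1_mix {p : G → ℝ} (hp : IsDist p) {P : G → G → ℝ}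
    (h : fam (conv p p) P = push (fun z : G × G => (z.1 + z.2, z.1)) (prodDist p p)) :
    mix (conv p p) P = p := by
  rw [← push_snd_fam, h, push_push]
  exact push_fst_prod p hp

lemma fibre1_ent {p : G → ℝ} (hp : IsDist p) {P : G → G → ℝ} (hP : ∀ u, IsDist (P u))
    (h : fam (conv p p) P = push (fun z : G × G => (z.1 + z.2, z.1)) (prodDist p p)) :
    ∑ u, conv p p u * ent (P u) = 2 * ent p - ent (conv p p) := by
  have h1 := ent_fam (c := conv p p) hP
  have h2 : ent (fam (conv p p) P) = ent p + ent p := by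
    rw [h, ← ent_prod hp hp, ← HH_id (prodDist p p)]
    apply HH_eq (isDist_prod hp hp)
    rintro ⟨a, b⟩ ⟨a', b'⟩
    simp only [Prod.mk.injEq]
    constructor
    · rintro ⟨h, rfl⟩; simpa using h
    · rintro ⟨rfl, rfl⟩; simp
  linarith

lemma fibre2 {p q : G → ℝ} {P R : G → G → ℝ}
    (h : fam (conv p p) P = push (fun z : G × G => (z.1 + z.2, z.1)) (prodDist p p))
    (h' : fam (conv q q) R = push (fun z : G × G => (z.1 + z.2, z.1)) (prodDist q q)) :
    fam (prodDist (conv p p) (conv q q)) (fun z => conv (P z.1) (R z.2)) =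
      push (fun z : (G × G) × (G × G) => ((z.1.1 + z.1.2, z.2.1 + z.2.2), z.1.1 + z.2.1))
        (prodDist (prodDist p p) (prodDist q q)) := by
  have h1 : fam (prodDist (conv p p) (conv q q)) (fun z => conv (P z.1) (R z.2)) =
      push (fun z : (G × G) × (G × G) => (z.1, z.2.1 + z.2.2))
        (fam (prodDist (conv p p) (conv q q)) (fun z => prodDist (P z.1) (R z.2))) := by
    rw [push_fam _ _ (fun _ (y : G × G) => y.1 + y.2)]
    simp_rw [conv_eq_push]
  have h2 : fam (prodDist (conv p p) (conv q q)) (fun z => prodDist (P z.1) (R z.2)) =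
      push (fun z : (G × G) × (G × G) => (Equiv.prodProdProdComm G G G G) z)
        (prodDist (fam (conv p p) P) (fam (conv q q) R)) := by
    rw [push_equiv]
    funext z
    simp [prodDist, fam]
    ring
  rw [h1, h2, h, h', ← push_prod, push_push, push_push]
  rfl

lemma reorder1 (p q : G → ℝ) : prodDist (prodDist p p) (prodDist q q) =
    push (fun z : (G × G) × (G × G) => ((z.1.1, z.2.1), (z.1.2, z.2.2)))
      (prodDist (prodDist p q) (prodDist p q)) := by
  have := push_equiv (Equiv.prodProdProdComm G G G G) (prodDist (prodDist p q) (prodDist p q))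
  have h2 : (fun a => (Equiv.prodProdProdComm G G G G) a) =
    (fun z : (G × G) × (G × G) => ((z.1.1, z.2.1), (z.1.2, z.2.2))) := by funext z; rfl
  rw [h2] at this
  rw [this]
  funext z
  simp [prodDist]
  ring

lemma reorder2 (p q : G → ℝ) : prodDist (prodDist p p) (prodDist q q) =
    push (fun z : (G × G) × (G × G) => ((z.1.1, z.2.1), (z.2.2, z.1.2)))
      (prodDist (prodDist p q) (prodDist p q)) := by
  rw [← push_swap p p]
  have h3 := push_prod (fun z : G × G => (z.2, z.1)) (fun z : G × G => z)
    (prodDist p p) (prodDist q q)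
  rw [push_id] at h3
  rw [← push_swap q q]
  have h4 := push_prod (fun z : G × G => z) (fun z : G × G => (z.2, z.1))
    (prodDist p p) (prodDist q q)
  rw [push_id] at h4
  rw [push_swap p p, h4.symm, reorder1, push_push]

lemma fibre_facts {p q : G → ℝ} (hp : IsDist p) (hq : IsDist q) {P R : G → G → ℝ}
    (h : fam (conv p p) P = push (fun z : G × G => (z.1 + z.2, z.1)) (prodDist p p))
    (h' : fam (conv q q) R = push (fun z : G × G => (z.1 + z.2, z.1)) (prodDist q q)) :
    let lam := fam (prodDist (conv p p) (conv q q)) (fun z => conv (P z.1) (R z.2))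
    HH lam (fun z => (z.2, z.1.1 + z.1.2)) = 2 * ent (conv p q) ∧
    HH lam (fun z => (z.2 + z.1.1, z.1.1 + z.1.2)) = 2 * ent (conv p q) := by
  intro lam
  have hpq := isDist_prod hp hq
  have hd := isDist_prod hpq hpq
  have hl : lam = push (fun z : (G × G) × (G × G) =>
    ((z.1.1 + z.1.2, z.2.1 + z.2.2), z.1.1 + z.2.1)) (prodDist (prodDist p p) (prodDist q q)) :=
    fibre2 h h'
  have hS : HH (prodDist (prodDist p q) (prodDist p q))
      (fun z => (z.1.1 + z.1.2, z.2.1 + z.2.2)) = 2 * ent (conv p q) := by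
    rw [HH_prod (fun z : G × G => z.1 + z.2) (fun z : G × G => z.1 + z.2) hpq hpq, ent_conv_eq]
    ring
  constructor
  · rw [hl, HH_push, reorder1, HH_push, ← hS]
    apply HH_eq hd
    rintro ⟨⟨a, b⟩, ⟨c, d⟩⟩ ⟨⟨a', b'⟩, ⟨c', d'⟩⟩
    simp only [Prod.mk.injEq]
    constructor
    · rintro ⟨h1, h2⟩
      refine ⟨h1, ?_⟩
      have e : ∀ a b c d : G, c + d = (a + c + (b + d)) - (a + b) := by intros; abel
      rw [e a b c d, e a' b' c' d', h1, h2]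
    · rintro ⟨h1, h2⟩
      refine ⟨h1, ?_⟩
      have e : ∀ a b c d : G, a + c + (b + d) = (a + b) + (c + d) := by intros; abel
      rw [e, e a', h1, h2]
  · rw [hl, HH_push, reorder2, HH_push, ← hS]
    apply HH_eq hd
    have e0 : ∀ a c d : G, a + d + (a + c) = c + d := by
      intro a c d
      have : a + d + (a + c) = (a + a) + (c + d) := by abel
      rw [this, ZModModule.add_self, zero_add]
    rintro ⟨⟨a, b⟩, ⟨c, d⟩⟩ ⟨⟨a', b'⟩, ⟨c', d'⟩⟩
    simp only [Prod.mk.injEq, e0]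
    constructor
    · rintro ⟨h1, h2⟩
      refine ⟨?_, h1⟩
      have e : ∀ a b c d : G, a + b = (a + c + (d + b)) - (c + d) := by intros; abel
      rw [e a b c d, e a' b' c' d', h1, h2]
    · rintro ⟨h1, h2⟩
      refine ⟨h2, ?_⟩
      have e : ∀ a b c d : G, a + c + (d + b) = (a + b) + (c + d) := by intros; abel
      rw [e, e a', h1, h2]

lemma ent_S {a b : G → ℝ} {Y : Type} [Fintype Y] {Q : G × G → Y → ℝ} (hQ : ∀ z, IsDist (Q z)) :
    HH (fam (prodDist a b) Q) (fun z => z.1.1 + z.1.2) = ent (conv a b) ∧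
    HH (fam (prodDist a b) Q) (fun z => z.1) = ent (prodDist a b) := by
  constructor
  · rw [ent_conv_eq, ← push_fst_fam (prodDist a b) hQ, HH_push, push_fst_fam _ hQ]
  · unfold HH
    exact congrArg ent (push_fst_fam _ hQ)

theorem package {p q : G → ℝ} (hp : IsDist p) (hq : IsDist q) :
    ∃ P R : G → G → ℝ, (∀ u, IsDist (P u)) ∧ (∀ w, IsDist (R w)) ∧
      mix (conv p p) P = p ∧ mix (conv q q) R = q ∧
      ∑ u, conv p p u * ent (P u) = 2 * ent p - ent (conv p p) ∧
      ∑ w, conv q q w * ent (R w) = 2 * ent q - ent (conv q q) ∧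
      (∑ z : G × G, prodDist (conv p p) (conv q q) z * ent (conv (P z.1) (R z.2)))
        + ent (conv (conv p p) (conv q q)) ≤ 2 * ent (conv p q) ∧
      (∑ z : G × G, prodDist (conv p p) (conv q q) z *
          ent (conv (conv (P z.1) (R z.2)) (conv (P z.1) (R z.2)))) ≤
        8 * ent (conv p q) - 3 * ent (conv (conv p p) (conv q q))
          - (ent (conv p p) + ent (conv q q))
          - 2 * ∑ z : G × G, prodDist (conv p p) (conv q q) z * ent (conv (P z.1) (R z.2)) := by
  obtain ⟨P, hP, hPf⟩ := fibre1 hp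
  obtain ⟨R, hR, hRf⟩ := fibre1 hq
  refine ⟨P, R, hP, hR, fibre1_mix hp hPf, fibre1_mix hq hRf, fibre1_ent hp hP hPf,
    fibre1_ent hq hR hRf, ?_⟩
  obtain ⟨F1, F2⟩ := fibre_facts hp hq hPf hRf
  have ha := isDist_conv hp hp
  have hb := isDist_conv hq hq
  set a := conv p p
  set b := conv q q
  have hab := isDist_prod ha hb
  have hQ : ∀ z : G × G, IsDist (conv (P z.1) (R z.2)) := fun z => isDist_conv (hP _) (hR _)
  set Q : G × G → G → ℝ := fun z => conv (P z.1) (R z.2) with hQdef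
  have hQ' : ∀ z, IsDist (Q z) := hQ
  have hl := isDist_fam hab hQ'
  have hm := ent_prod ha hb
  obtain ⟨S1, S2⟩ := ent_S (a := a) (b := b) hQ'
  have el := ent_fam (c := prodDist a b) hQ'
  set e := ∑ z : G × G, prodDist a b z * ent (conv (P z.1) (R z.2)) with he
  have hee : ∑ z, prodDist a b z * ent (Q z) = e := rfl
  refine ⟨?_, ?_⟩
  · have h := HH_submod hl (fun z => z.2) (fun z => z.1.1) (fun z => z.1.1 + z.1.2)
    have h1 : HH (fam (prodDist a b) Q) (fun z => (z.2, z.1.1, z.1.1 + z.1.2)) =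
        ent (fam (prodDist a b) Q) := by
      rw [← HH_id (fam (prodDist a b) Q)]
      apply HH_eq hl
      rintro ⟨⟨u, w⟩, x⟩ ⟨⟨u', w'⟩, x'⟩
      simp only [Prod.mk.injEq]
      constructor
      · rintro ⟨rfl, rfl, h2⟩
        exact ⟨⟨rfl, add_left_cancel h2⟩, rfl⟩
      · rintro ⟨⟨rfl, rfl⟩, rfl⟩; simp
    have h2 : HH (fam (prodDist a b) Q) (fun z => (z.1.1, z.1.1 + z.1.2)) =
        HH (fam (prodDist a b) Q) (fun z => z.1) := by
      apply HH_eq hl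
      rintro ⟨⟨u, w⟩, x⟩ ⟨⟨u', w'⟩, x'⟩
      simp only [Prod.mk.injEq]
      constructor
      · rintro ⟨rfl, h3⟩
        exact ⟨rfl, add_left_cancel h3⟩
      · rintro ⟨rfl, rfl⟩; simp
    linarith
  · have hQQ : ∀ z, IsDist (prodDist (Q z) (Q z)) := fun z => isDist_prod (hQ' z) (hQ' z)
    set ρ := fam (prodDist a b) (fun z => prodDist (Q z) (Q z)) with hρ
    have hr : IsDist ρ := isDist_fam hab hQQ
    obtain ⟨T1, T2⟩ := ent_S (a := a) (b := b) hQQ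
    have er : ent ρ = ent a + ent b + 2 * e := by
      rw [hρ, ent_fam hQQ, hm, ← hee, Finset.mul_sum]
      congr 1
      apply Finset.sum_congr rfl
      intro z _
      rw [ent_prod (hQ' z) (hQ' z)]; ring
    have m1 : push (fun z : (G × G) × (G × G) => (z.1, z.2.1)) ρ = fam (prodDist a b) Q := by
      rw [hρ, push_fam _ _ (fun _ (y : G × G) => y.1)]
      congr 1
      funext z
      exact push_fst_prod _ (hQ' z)
    have m2 : push (fun z : (G × G) × (G × G) => (z.1, z.2.2)) ρ = fam (prodDist a b) Q := by
      rw [hρ, push_fam _ _ (fun _ (y : G × G) => y.2)]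
      congr 1
      funext z
      exact push_snd_prod (hQ' z) _
    have m3 : HH ρ (fun z => (z.1, z.2.1 + z.2.2)) = ent a + ent b +
        ∑ z, prodDist a b z * ent (conv (Q z) (Q z)) := by
      unfold HH
      rw [hρ, push_fam _ _ (fun _ (y : G × G) => y.1 + y.2), ← hm]
      simp_rw [← conv_eq_push]
      exact ent_fam (fun z => isDist_conv (hQ' z) (hQ' z))
    have A1 : HH ρ (fun z => (z.2.1, z.1.1 + z.1.2)) = 2 * ent (conv p q) := by
      rw [← F1]; change _ = HH (fam (prodDist a b) Q) _
      rw [← m1, HH_push]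
    have C1 : HH ρ (fun z => (z.2.1 + z.1.1, z.1.1 + z.1.2)) = 2 * ent (conv p q) := by
      rw [← F2]; change _ = HH (fam (prodDist a b) Q) _
      rw [← m1, HH_push]
    have A2 : HH ρ (fun z => (z.2.2, z.1.1 + z.1.2)) = 2 * ent (conv p q) := by
      rw [← F1]; change _ = HH (fam (prodDist a b) Q) _
      rw [← m2, HH_push]
    have C2 : HH ρ (fun z => (z.2.2 + z.1.1, z.1.1 + z.1.2)) = 2 * ent (conv p q) := by
      rw [← F2]; change _ = HH (fam (prodDist a b) Q) _
      rw [← m2, HH_push]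
    have s1 := HH_submod hr (fun z => z.2.1) (fun z => z.2.1 + z.1.1)
      (fun z => (z.2.1 + z.2.2 + z.1.1, z.1.1 + z.1.2))
    have s2 := HH_submod hr (fun z => z.2.1) (fun z => z.2.2 + z.1.1) (fun z => z.1.1 + z.1.2)
    have s3 := HH_submod hr (fun z => z.2.1 + z.1.1) (fun z => z.2.2) (fun z => z.1.1 + z.1.2)
    have s4 := HH_submod hr (fun z => z.2.1 + z.2.2 + z.1.1) (fun z => z.1.1)
      (fun z => z.1.1 + z.1.2)
    have e1 : HH ρ (fun z => (z.2.1, z.2.1 + z.1.1, (z.2.1 + z.2.2 + z.1.1, z.1.1 + z.1.2))) =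
        ent ρ := by
      rw [← HH_id ρ]
      apply HH_eq hr
      rintro ⟨⟨u, w⟩, x, y⟩ ⟨⟨u', w'⟩, x', y'⟩
      simp only [Prod.mk.injEq]
      constructor
      · rintro ⟨rfl, h1, h2, h3⟩
        have h1 := add_left_cancel h1
        subst h1
        exact ⟨⟨rfl, add_left_cancel h3⟩, rfl, add_left_cancel (add_right_cancel h2)⟩
      · rintro ⟨⟨rfl, rfl⟩, rfl, rfl⟩; simp
    have e2 : HH ρ (fun z => (z.2.1, (z.2.1 + z.2.2 + z.1.1, z.1.1 + z.1.2))) =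
        HH ρ (fun z => (z.2.1, z.2.2 + z.1.1, z.1.1 + z.1.2)) := by
      apply HH_eq hr
      rintro ⟨⟨u, w⟩, x, y⟩ ⟨⟨u', w'⟩, x', y'⟩
      simp only [Prod.mk.injEq, add_assoc]
      constructor
      · rintro ⟨rfl, h2, h3⟩
        exact ⟨rfl, add_left_cancel h2, h3⟩
      · rintro ⟨rfl, h2, h3⟩; simp [h2, h3]
    have e3 : HH ρ (fun z => (z.2.1 + z.1.1, (z.2.1 + z.2.2 + z.1.1, z.1.1 + z.1.2))) =
        HH ρ (fun z => (z.2.1 + z.1.1, z.2.2, z.1.1 + z.1.2)) := by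
      apply HH_eq hr
      rintro ⟨⟨u, w⟩, x, y⟩ ⟨⟨u', w'⟩, x', y'⟩
      simp only [Prod.mk.injEq, add_right_comm x y u, add_right_comm x' y' u']
      constructor
      · rintro ⟨h1, h2, h3⟩
        rw [h1] at h2
        exact ⟨h1, add_left_cancel h2, h3⟩
      · rintro ⟨h1, h2, h3⟩; simp [h1, h2, h3]
    have e4 : HH ρ (fun z => (z.2.1 + z.2.2 + z.1.1, z.1.1, z.1.1 + z.1.2)) =
        HH ρ (fun z => (z.1, z.2.1 + z.2.2)) := by
      apply HH_eq hr
      rintro ⟨⟨u, w⟩, x, y⟩ ⟨⟨u', w'⟩, x', y'⟩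
      simp only [Prod.mk.injEq]
      constructor
      · rintro ⟨h1, rfl, h3⟩
        exact ⟨⟨rfl, add_left_cancel h3⟩, add_right_cancel h1⟩
      · rintro ⟨⟨rfl, rfl⟩, h⟩; simp [h]
    have e5 : HH ρ (fun z => (z.1.1, z.1.1 + z.1.2)) = HH ρ (fun z => z.1) := by
      apply HH_eq hr
      rintro ⟨⟨u, w⟩, x, y⟩ ⟨⟨u', w'⟩, x', y'⟩
      simp only [Prod.mk.injEq]
      constructor
      · rintro ⟨rfl, h3⟩
        exact ⟨rfl, add_left_cancel h3⟩
      · rintro ⟨rfl, rfl⟩; simp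
    have hgoal : (∑ z : G × G, prodDist a b z *
        ent (conv (conv (P z.1) (R z.2)) (conv (P z.1) (R z.2)))) =
        ∑ z, prodDist a b z * ent (conv (Q z) (Q z)) := rfl
    rw [hgoal]
    rw [← hρ] at T1 T2
    linarith

end package

end DS

/-! Part 4: entropic PFR with a weak constant, by the fibring argument. -/

namespace DS

set_option linter.unusedSectionVars false

section ruzsa

variable {G : Type} [AddCommGroup G] [Finite G]

lemma dR_triangle {p q r : G → ℝ} (hp : IsDist p) (hq : IsDist q) (hr : IsDist r) :
    dRuzsa p r ≤ dRuzsa p q + dRuzsa q r := by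
  unfold dRuzsa
  have h1 := ent_kv hp hq hr
  have h2 := ent_le_conv_left (isDist_conv hp hr) hq
  have h3 : conv (conv p r) q = conv (conv p q) r := by
    rw [conv_assoc, conv_assoc, conv_comm r q]
  rw [h3] at h2
  linarith

lemma dR_symm (p q : G → ℝ) : dRuzsa p q = dRuzsa q p := by
  unfold dRuzsa; rw [conv_comm]; ring

lemma dR_nonneg {p q : G → ℝ} (hp : IsDist p) (hq : IsDist q) : 0 ≤ dRuzsa p q := by
  unfold dRuzsa
  have h1 := ent_le_conv_left hp hq
  have h2 := ent_le_conv_right hp hq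
  linarith

lemma dR_diff {p q : G → ℝ} (hp : IsDist p) (hq : IsDist q) : ent p ≤ ent q + 2 * dRuzsa p q := by
  unfold dRuzsa
  have h1 := ent_le_conv_left hp hq
  linarith

lemma dR_proj {G' : Type} [AddCommGroup G'] [Finite G'] {F : Type*} [FunLike F G G']
    [AddMonoidHomClass F G G'] (φ : F) {p q : G → ℝ} (hp : IsDist p) (hq : IsDist q) :
    dRuzsa (push φ p) (push φ q) ≤ dRuzsa p q := by
  unfold dRuzsa
  have h1 := ent_proj φ hp hq
  have h2 := ent_proj φ hq hp
  rw [conv_comm q p, conv_comm (push φ q)] at h2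
  linarith

lemma mix_prod {p q : G → ℝ} [Fintype G] (a b : G → ℝ) (P R : G → G → ℝ)
    (h1 : mix a P = p) (h2 : mix b R = q) :
    mix (prodDist a b) (fun z => conv (P z.1) (R z.2)) = conv p q := by
  rw [← h1, conv_mix]
  funext x
  unfold mix
  rw [Fintype.sum_prod_type]
  apply Finset.sum_congr rfl
  intro u _
  have h3 := congrFun (conv_mix b R (P u)) x
  dsimp only
  rw [conv_comm (P u) q, ← h2, h3]
  unfold mix
  rw [Finset.mul_sum]
  apply Finset.sum_congr rfl
  intro w _
  rw [conv_comm (P u)]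
  simp [prodDist, mul_assoc]

lemma avg_conv_le {B : Type*} [Fintype B] {c : B → ℝ} {P : B → G → ℝ} {t p : G → ℝ} (hc : IsDist c)
    (hP : ∀ b, IsDist (P b)) (ht : IsDist t) (h : mix c P = p) :
    ∑ b, c b * ent (conv t (P b)) ≤ ent (conv t p) := by
  rw [conv_comm, ← h, conv_mix]
  have := avg_ent_le_mix hc (fun b => isDist_conv (hP b) ht)
  simp_rw [conv_comm t]
  exact this

end ruzsa

section improvement

variable {G : Type} [AddCommGroup G] [Module (ZMod 2) G] [Fintype G]

lemma improve_fav {p q : G → ℝ} (hp : IsDist p) (hq : IsDist q)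
    (hm : 2 * ent (conv p q) ≤ ent (conv p p) + ent (conv q q)) :
    ∃ x y : G → ℝ, IsDist x ∧ IsDist y ∧
      dRuzsa x y + (1 / 64) * (dRuzsa p x + dRuzsa q y) ≤ (1 - 2 / 64) * dRuzsa p q := by
  obtain ⟨P, R, hP, hR, mP, mR, eP, eR, hI, hB⟩ := package hp hq
  have ha := isDist_conv hp hp
  have hb := isDist_conv hq hq
  have hab := isDist_prod ha hb
  have hpq := isDist_conv hp hq
  have k0 := dR_nonneg hp hq
  have kv1 := ent_kv hp hq hp
  have kv2 := ent_kv hq hp hq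
  have kvp := ent_kv hp hp hp
  have kvq := ent_kv hq hq hq
  rw [conv_comm q p] at kv1 kv2
  have le1 : ent (conv p p) ≤ ent (conv (conv p q) p) := by
    have := ent_le_conv_left ha hq
    rwa [conv_assoc, conv_comm p q, ← conv_assoc] at this
  have le2 : ent (conv q q) ≤ ent (conv (conv p q) q) := by
    have := ent_le_conv_left hb hp
    rwa [conv_assoc, conv_comm q (conv q p), conv_comm q p] at this
  by_contra hno
  push Not at hno
  set c1 := ent (conv p q)
  set a := conv p p
  set b := conv q q
  set c2 := ent (conv a b)
  set e := ∑ z : G × G, prodDist a b z * ent (conv (P z.1) (R z.2)) with he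
  -- candidate 1
  have v1 := hno a b ha hb
  have v1' : dRuzsa a b + (1/64) * (dRuzsa p a + dRuzsa q b) ≤ c2 - (ent a + ent b) / 2 +
      (6 / 64) * dRuzsa p q := by
    have e1 : conv p a = conv (conv p p) p := conv_comm _ _
    have e2 : conv q b = conv (conv q q) q := conv_comm _ _
    unfold dRuzsa
    rw [e1, e2]
    linarith
  -- candidate 2
  have v2 : ∑ z : G × G, prodDist a b z * (dRuzsa (P z.1) (R z.2) +
      (1/64) * (dRuzsa p (P z.1) + dRuzsa q (R z.2))) ≤
      e - (ent p + ent q) + (ent a + ent b) / 2 + (6 / 64) * dRuzsa p q := by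
    have s1 := sum_prod_fst (p := a) hb (fun u => ent (P u))
    have s2 := sum_prod_snd (q := b) ha (fun u => ent (R u))
    have s3 := sum_prod_fst (p := a) hb (fun u => ent (conv p (P u)))
    have s4 := sum_prod_snd (q := b) ha (fun u => ent (conv q (R u)))
    have s5 := sum_dist_const hab (ent p)
    have s6 := sum_dist_const hab (ent q)
    have a1 := avg_conv_le ha hP hp mP
    have a2 := avg_conv_le hb hR hq mR
    have key : ∑ z : G × G, prodDist a b z * (dRuzsa (P z.1) (R z.2) +
      (1/64) * (dRuzsa p (P z.1) + dRuzsa q (R z.2))) = e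
        - (1/2 + 1/128) * (∑ z : G × G, prodDist a b z * ent (P z.1))
        - (1/2 + 1/128) * (∑ z : G × G, prodDist a b z * ent (R z.2))
        + (1/64) * (∑ z : G × G, prodDist a b z * ent (conv p (P z.1)))
        + (1/64) * (∑ z : G × G, prodDist a b z * ent (conv q (R z.2)))
        - (1/128) * (∑ z : G × G, prodDist a b z * ent p)
        - (1/128) * (∑ z : G × G, prodDist a b z * ent q) := by
      rw [he]
      simp_rw [Finset.mul_sum]
      rw [← Finset.sum_sub_distrib, ← Finset.sum_sub_distrib, ← Finset.sum_add_distrib,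
        ← Finset.sum_add_distrib, ← Finset.sum_sub_distrib, ← Finset.sum_sub_distrib]
      apply Finset.sum_congr rfl
      intro z _
      unfold dRuzsa
      ring
    rw [key, s1, s2, s3, s4, s5, s6, eP, eR]
    unfold dRuzsa
    linarith
  have v2' : (1 - 2/64) * dRuzsa p q <
      e - (ent p + ent q) + (ent a + ent b) / 2 + (6 / 64) * dRuzsa p q := by
    obtain ⟨z, hz⟩ := exists_le_avg hab v2
    exact lt_of_lt_of_le (hno _ _ (hP _) (hR _)) hz
  -- candidate 3
  have v3 : ∑ z : G × G, prodDist a b z * (dRuzsa (conv (P z.1) (R z.2)) (conv (P z.1) (R z.2)) +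
      (1/64) * (dRuzsa p (conv (P z.1) (R z.2)) + dRuzsa q (conv (P z.1) (R z.2)))) ≤
      8 * c1 - 3 * c2 - (ent a + ent b) - 3 * e + (6 / 64) * dRuzsa p q := by
    have mQ := mix_prod a b P R mP mR
    have hQ : ∀ z : G × G, IsDist (conv (P z.1) (R z.2)) := fun z => isDist_conv (hP _) (hR _)
    have a1 := avg_conv_le hab hQ hp mQ
    have a2 := avg_conv_le hab hQ hq mQ
    rw [conv_comm] at a1 a2
    have s5 := sum_dist_const hab (ent p)
    have s6 := sum_dist_const hab (ent q)
    have l1 : 2 * ent p - ent a ≤ e := by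
      rw [← eP, ← sum_prod_fst (p := a) hb (fun u => ent (P u))]
      exact sum_dist_mono hab (fun z => ent_le_conv_left (hP _) (hR _))
    have l2 : 2 * ent q - ent b ≤ e := by
      rw [← eR, ← sum_prod_snd (q := b) ha (fun u => ent (R u))]
      exact sum_dist_mono hab (fun z => ent_le_conv_right (hP _) (hR _))
    have key : ∑ z : G × G, prodDist a b z *
      (dRuzsa (conv (P z.1) (R z.2)) (conv (P z.1) (R z.2)) +
      (1/64) * (dRuzsa p (conv (P z.1) (R z.2)) + dRuzsa q (conv (P z.1) (R z.2)))) =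
        (∑ z : G × G, prodDist a b z *
          ent (conv (conv (P z.1) (R z.2)) (conv (P z.1) (R z.2)))) - (1 + 1/64) * e
        + (1/64) * (∑ z : G × G, prodDist a b z * ent (conv p (conv (P z.1) (R z.2))))
        + (1/64) * (∑ z : G × G, prodDist a b z * ent (conv q (conv (P z.1) (R z.2))))
        - (1/128) * (∑ z : G × G, prodDist a b z * ent p)
        - (1/128) * (∑ z : G × G, prodDist a b z * ent q) := by
      rw [he]
      simp_rw [Finset.mul_sum]
      rw [← Finset.sum_sub_distrib, ← Finset.sum_add_distrib,
        ← Finset.sum_add_distrib, ← Finset.sum_sub_distrib, ← Finset.sum_sub_distrib]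
      apply Finset.sum_congr rfl
      intro z _
      unfold dRuzsa
      ring
    rw [key, s5, s6]
    unfold dRuzsa
    have a2' : ∑ z : G × G, prodDist a b z * ent (conv q (conv (P z.1) (R z.2))) ≤
      ent (conv (conv p q) q) := by
        rw [conv_comm (conv p q) q]
        exact avg_conv_le hab hQ hq mQ
    have a1' : ∑ z : G × G, prodDist a b z * ent (conv p (conv (P z.1) (R z.2))) ≤
      ent (conv (conv p q) p) := by
        rw [conv_comm (conv p q) p]
        exact avg_conv_le hab hQ hp mQ
    have e3 : conv (conv p q) q = conv (conv q p) q := by rw [conv_comm p q]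
    linarith
  have v3' : (1 - 2/64) * dRuzsa p q <
      8 * c1 - 3 * c2 - (ent a + ent b) - 3 * e + (6 / 64) * dRuzsa p q := by
    obtain ⟨z, hz⟩ := exists_le_avg hab v3
    exact lt_of_lt_of_le
      (hno _ _ (isDist_conv (hP _) (hR _)) (isDist_conv (hP _) (hR _))) hz
  have dk : dRuzsa p q = c1 - ent p / 2 - ent q / 2 := rfl
  linarith

lemma improve {p q : G → ℝ} (hp : IsDist p) (hq : IsDist q) :
    ∃ x y : G → ℝ, IsDist x ∧ IsDist y ∧
      dRuzsa x y + (1 / 64) * (dRuzsa p x + dRuzsa q y) ≤ (1 - 1 / 64) * dRuzsa p q := by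
  have k0 := dR_nonneg hp hq
  by_cases hm : 2 * ent (conv p q) ≤ ent (conv p p) + ent (conv q q)
  · obtain ⟨x, y, hx, hy, h⟩ := improve_fav hp hq hm
    exact ⟨x, y, hx, hy, by linarith⟩
  · push Not at hm
    have hh : dRuzsa p p ≤ dRuzsa p q ∨ dRuzsa q q ≤ dRuzsa p q := by
      by_contra hcon
      push Not at hcon
      unfold dRuzsa at hcon
      linarith
    rcases hh with hh | hh
    · obtain ⟨x, y, hx, hy, h⟩ := improve_fav hp hp (by linarith)
      have t := dR_triangle hq hp hy
      rw [dR_symm q p] at t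
      exact ⟨x, y, hx, hy, by linarith⟩
    · obtain ⟨x, y, hx, hy, h⟩ := improve_fav hq hq (by linarith)
      have t := dR_triangle hp hq hx
      exact ⟨x, y, hx, hy, by linarith⟩

lemma continuous_ent : Continuous (fun p : G → ℝ => ent p) := by
  simp_rw [ent_eq_sum]
  exact continuous_finsetSum _ fun a _ => Real.continuous_negMulLog.comp (continuous_apply a)

lemma continuous_conv : Continuous (fun z : (G → ℝ) × (G → ℝ) => conv z.1 z.2) := by
  unfold conv
  simp_rw [finsum_eq_sum_of_fintype]
  fun_prop

lemma continuous_dR : Continuous (fun z : (G → ℝ) × (G → ℝ) => dRuzsa z.1 z.2) := by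
  unfold dRuzsa
  have h1 : Continuous (fun z : (G → ℝ) × (G → ℝ) => ent (conv z.1 z.2)) :=
    continuous_ent.comp continuous_conv
  have h2 : Continuous (fun z : (G → ℝ) × (G → ℝ) => ent z.1) := continuous_ent.comp continuous_fst
  have h3 : Continuous (fun z : (G → ℝ) × (G → ℝ) => ent z.2) := continuous_ent.comp continuous_snd
  fun_prop

lemma exists_zero {p q : G → ℝ} (hp : IsDist p) (hq : IsDist q) :
    ∃ x y : G → ℝ, IsDist x ∧ IsDist y ∧ dRuzsa x y ≤ 0 ∧
      dRuzsa p x + dRuzsa q y ≤ 128 * dRuzsa p q := by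
  have k0 := dR_nonneg hp hq
  have mem : ∀ r : G → ℝ, r ∈ stdSimplex ℝ G ↔ IsDist r := fun r => (isDist_iff r).symm
  have hcomp : IsCompact (stdSimplex ℝ G ×ˢ stdSimplex ℝ G) :=
    (isCompact_stdSimplex ℝ G).prod (isCompact_stdSimplex ℝ G)
  have hF : Continuous (fun z : (G → ℝ) × (G → ℝ) =>
      dRuzsa z.1 z.2 + (1 / 64) * (dRuzsa p z.1 + dRuzsa q z.2)) := by
    have c1 : Continuous (fun z : (G → ℝ) × (G → ℝ) => dRuzsa p z.1) :=
      continuous_dR.comp (continuous_const.prodMk continuous_fst)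
    have c2 : Continuous (fun z : (G → ℝ) × (G → ℝ) => dRuzsa q z.2) :=
      continuous_dR.comp (continuous_const.prodMk continuous_snd)
    have c3 := continuous_dR (G := G)
    fun_prop
  obtain ⟨z, hz, hmin⟩ := hcomp.exists_isMinOn ⟨(q, p), ⟨(mem q).2 hq, (mem p).2 hp⟩⟩ hF.continuousOn
  obtain ⟨x, y⟩ := z
  have hx : IsDist x := (mem x).1 hz.1
  have hy : IsDist y := (mem y).1 hz.2
  have hmin' : ∀ x' y' : G → ℝ, IsDist x' → IsDist y' →
      dRuzsa x y + (1 / 64) * (dRuzsa p x + dRuzsa q y) ≤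
      dRuzsa x' y' + (1 / 64) * (dRuzsa p x' + dRuzsa q y') := by
    intro x' y' hx' hy'
    exact hmin (show ((x', y') : (G → ℝ) × (G → ℝ)) ∈ _ from ⟨(mem x').2 hx', (mem y').2 hy'⟩)
  have n1 := dR_nonneg hx hy
  refine ⟨x, y, hx, hy, ?_, ?_⟩
  · obtain ⟨x', y', hx', hy', h⟩ := improve hx hy
    have h2 := hmin' x' y' hx' hy'
    have t1 := dR_triangle hp hx hx'
    have t2 := dR_triangle hq hy hy'
    linarith
  · have h2 := hmin' q p hq hp
    rw [dR_symm q p] at h2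
    linarith

/-- The group of periods of a function. -/
def periods (x : G → ℝ) : Submodule (ZMod 2) G where
  carrier := {v | ∀ z, x (z + v) = x z}
  add_mem' := by
    intro a b ha hb z
    rw [← add_assoc, hb, ha]
  zero_mem' := by intro z; simp
  smul_mem' := by
    intro c v hv
    have : c = 0 ∨ c = 1 := by revert c; decide
    rcases this with rfl | rfl
    · intro z; simp
    · simpa using hv

lemma log_card_periods {x : G → ℝ} (hx : IsDist x) :
    Real.log (Nat.card (periods x)) ≤ ent x := by
  classical
  have hx' := (isDist_iff x).1 hx
  have hpos : (0 : ℝ) < Nat.card (periods x) := by exact_mod_cast Nat.card_pos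
  have hle : ∀ z, x z * Nat.card (periods x) ≤ 1 := by
    intro z
    have h1 : ∑ v : periods x, x (z + v) = x z * Nat.card (periods x) := by
      rw [Finset.sum_congr rfl (fun v _ => v.2 z)]
      simp [mul_comm]
    rw [← h1, ← hx'.2]
    have inj : Function.Injective (fun v : periods x => z + (v : G)) := by
      intro v w h
      exact Subtype.ext (add_left_cancel h)
    rw [← Finset.sum_image (f := x) (s := Finset.univ) (g := fun v : periods x => z + (v : G))
      (fun a _ b _ h => inj h)]
    exact Finset.sum_le_sum_of_subset_of_nonneg (Finset.subset_univ _) (fun i _ _ => hx'.1 i)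
  rw [ent_eq_sum]
  calc Real.log (Nat.card (periods x)) = ∑ z, x z * Real.log (Nat.card (periods x)) := by
        rw [← Finset.sum_mul, hx'.2, one_mul]
    _ ≤ _ := by
        apply Finset.sum_le_sum
        intro z _
        rcases (hx'.1 z).eq_or_lt with h | h
        · simp [← h]
        · unfold Real.negMulLog
          have : Real.log (x z * Nat.card (periods x)) ≤ 0 :=
            Real.log_nonpos (by positivity) (hle z)
          rw [Real.log_mul h.ne' hpos.ne'] at this
          nlinarith

lemma periods_of_eq {x y : G → ℝ} (hx : IsDist x) (hy : IsDist y)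
    (h : ent (conv y x) ≤ ent x) {b b' : G} (hb : y b ≠ 0) (hb' : y b' ≠ 0) :
    b - b' ∈ periods x := by
  have hx' := (isDist_iff x).1 hx
  have hy' := (isDist_iff y).1 hy
  have jen : ∀ z, ∑ c, y c • Real.negMulLog (x (z - c)) ≤ Real.negMulLog (∑ c, y c • x (z - c)) := by
    intro z
    exact Real.concaveOn_negMulLog.le_map_sum (fun i _ => hy'.1 i) hy'.2
      (fun i _ => hx'.1 _)
  have tot : ∑ z, ∑ c, y c • Real.negMulLog (x (z - c)) = ent x := by
    rw [Finset.sum_comm]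
    simp_rw [smul_eq_mul, ← Finset.mul_sum]
    have : ∀ c : G, ∑ z, Real.negMulLog (x (z - c)) = ent x := by
      intro c
      rw [ent_eq_sum]
      exact Equiv.sum_comp (Equiv.subRight c) (fun z => Real.negMulLog (x z))
    simp_rw [this]
    rw [← Finset.sum_mul, hy'.2, one_mul]
  have tot2 : ent (conv y x) = ∑ z, Real.negMulLog (∑ c, y c • x (z - c)) := by
    rw [ent_eq_sum]
    unfold conv
    simp_rw [finsum_eq_sum_of_fintype, smul_eq_mul]
  have eq : ∀ z, Real.negMulLog (∑ c, y c • x (z - c)) = ∑ c, y c • Real.negMulLog (x (z - c)) := by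
    intro z
    have := (Finset.sum_eq_sum_iff_of_le (s := Finset.univ) (fun i _ => jen i)).1
      (le_antisymm (Finset.sum_le_sum fun i _ => jen i) (by rw [tot, ← tot2]; exact h))
    exact (this z (Finset.mem_univ _)).symm
  have same : ∀ z, x (z - b) = x (z - b') := by
    intro z
    have := (Real.strictConcaveOn_negMulLog.map_sum_eq_iff' (t := Finset.univ)
      (fun i _ => hy'.1 i) hy'.2 (fun i _ => hx'.1 (z - i))).1 (eq z)
    rw [this b (Finset.mem_univ _) hb, this b' (Finset.mem_univ _) hb']
  intro z
  have := same (z + b)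
  rw [add_sub_cancel_right] at this
  rw [this, add_sub_assoc]

lemma ent_point {y : G → ℝ} (hy : IsDist y) (V : Submodule (ZMod 2) G)
    (h : ∀ b b', y b ≠ 0 → y b' ≠ 0 → b - b' ∈ V) : ent (push V.mkQ y) = 0 := by
  classical
  have := Fintype.ofFinite (G ⧸ V)
  have hy' := (isDist_iff y).1 hy
  obtain ⟨b0, hb0⟩ : ∃ b, y b ≠ 0 := by
    by_contra hcon
    push Not at hcon
    have := hy'.2
    simp [hcon] at this
  have hq : ∀ b, y b ≠ 0 → V.mkQ b = V.mkQ b0 := by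
    intro b hb
    simp only [Submodule.mkQ_apply]
    exact (Submodule.Quotient.eq V).2 (h b b0 hb hb0)
  have hval : ∀ c, push V.mkQ y c = if V.mkQ b0 = c then 1 else 0 := by
    intro c
    rw [push_apply]
    split_ifs with hc
    · rw [← hy'.2]
      apply Finset.sum_congr rfl
      intro b _
      by_cases hb : y b = 0
      · simp [hb]
      · rw [if_pos ((hq b hb).trans hc)]
    · apply Finset.sum_eq_zero
      intro b _
      by_cases hb : y b = 0
      · simp [hb]
      · rw [if_neg]
        rw [hq b hb]; exact hc
  rw [ent_eq_sum]
  apply Finset.sum_eq_zero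
  intro c _
  rw [hval]
  split_ifs <;> simp

theorem pfr {p q : G → ℝ} (hp : IsDist p) (hq : IsDist q) :
    ∃ V : Submodule (ZMod 2) G,
      Real.log (Nat.card V) ≤ ent q + 256 * dRuzsa p q ∧
      ent (push V.mkQ p) + ent (push V.mkQ q) ≤ 514 * dRuzsa p q := by
  obtain ⟨x, y, hx, hy, h0, h1⟩ := exists_zero hp hq
  have l1 := ent_le_conv_left hx hy
  have l2 := ent_le_conv_right hx hy
  have h0' : ent (conv x y) - ent x / 2 - ent y / 2 ≤ 0 := h0
  have hle : ent (conv y x) ≤ ent x := by rw [conv_comm]; linarith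
  have n1 := dR_nonneg hp hx
  have n2 := dR_nonneg hq hy
  refine ⟨periods x, ?_, ?_⟩
  · have := log_card_periods hx
    have := dR_diff hy hq
    rw [dR_symm] at this
    linarith
  · set V := periods x
    have hV := ent_point hy V (fun b b' hb hb' => periods_of_eq hx hy hle hb hb')
    have a1 := dR_diff (isDist_push V.mkQ hq) (isDist_push V.mkQ hy)
    have a2 := dR_proj V.mkQ hq hy
    have a3 := dR_diff (isDist_push V.mkQ hp) (isDist_push V.mkQ hq)
    have a4 := dR_proj V.mkQ hp hq
    linarith

end improvement

end DS

/-! Part 5: the reduction statements and the bootstrapping lemmas. -/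

namespace DS

set_option linter.unusedSectionVars false

/-- Quotients of finite groups are finite. -/
instance finite_quot {G : Type} [AddCommGroup G] [Module (ZMod 2) G] [Finite G]
    (V : Submodule (ZMod 2) G) : Finite (G ⧸ V) :=
  Finite.of_surjective _ (Submodule.mkQ_surjective V)

section basics

variable {G : Type} [AddCommGroup G] [Finite G]

lemma s_le_left {p q : G → ℝ} (hp : IsDist p) (hq : IsDist q) : sDouble p q ≤ ent p := by
  unfold sDouble
  have := ent_le_conv_right hp hq
  linarith

lemma s_le_right {p q : G → ℝ} (hp : IsDist p) (hq : IsDist q) : sDouble p q ≤ ent q := by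
  unfold sDouble
  have := ent_le_conv_left hp hq
  linarith

lemma s_drop_left {G' : Type} [AddCommGroup G'] [Finite G'] {F : Type*} [FunLike F G G']
    [AddMonoidHomClass F G G'] (φ : F) {p q : G → ℝ} (hp : IsDist p) (hq : IsDist q) :
    sDouble p q ≤ sDouble (push φ p) (push φ q) + (ent p - ent (push φ p)) := by
  unfold sDouble
  have h := ent_proj φ hq hp
  rw [conv_comm q p, conv_comm (push φ q)] at h
  linarith

lemma s_drop_right {G' : Type} [AddCommGroup G'] [Finite G'] {F : Type*} [FunLike F G G']
    [AddMonoidHomClass F G G'] (φ : F) {p q : G → ℝ} (hp : IsDist p) (hq : IsDist q) :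
    sDouble p q ≤ sDouble (push φ p) (push φ q) + (ent q - ent (push φ q)) := by
  unfold sDouble
  have h := ent_proj φ hp hq
  linarith

variable [Module (ZMod 2) G]

lemma lift_sub (V : Submodule (ZMod 2) G) (W : Submodule (ZMod 2) (G ⧸ V)) :
    ∃ V' : Submodule (ZMod 2) G,
      Real.log (Nat.card V') ≤ Real.log (Nat.card V) + Real.log (Nat.card W) ∧
      ∀ p : G → ℝ, IsDist p → ent (push V'.mkQ p) = ent (push W.mkQ (push V.mkQ p)) := by
  refine ⟨W.comap V.mkQ, ?_, ?_⟩
  · have hV : (0 : ℝ) < Nat.card V := by exact_mod_cast Nat.card_pos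
    have hW : (0 : ℝ) < Nat.card W := by exact_mod_cast Nat.card_pos
    have hVW : (0 : ℝ) < Nat.card (W.comap V.mkQ) := by exact_mod_cast Nat.card_pos
    rw [← Real.log_mul hV.ne' hW.ne']
    apply Real.log_le_log hVW
    have hs := Submodule.mkQ_surjective V
    have key : Nat.card (W.comap V.mkQ) ≤ Nat.card (V × W) := by
      have hmem : ∀ v : G, v - Function.surjInv hs (V.mkQ v) ∈ V := by
        intro v
        rw [← Submodule.Quotient.eq V]
        exact (Function.surjInv_eq hs (V.mkQ v)).symm
      let f : W.comap V.mkQ → V × W := fun v =>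
        (⟨v - Function.surjInv hs (V.mkQ v), hmem v⟩, ⟨V.mkQ v, v.2⟩)
      apply Nat.card_le_card_of_injective f
      intro v w h
      have h1 := congrArg (fun z : V × W => (z.1 : G)) h
      have h2 := congrArg (fun z : V × W => (z.2 : G ⧸ V)) h
      dsimp only [f] at h1 h2
      rw [h2] at h1
      exact Subtype.ext (sub_left_injective h1)
    rw [Nat.card_prod] at key
    exact_mod_cast key
  · intro p hp
    rw [push_push]
    apply HH_eq hp
    intro a b
    simp only [Submodule.mkQ_apply, Submodule.Quotient.eq]
    rw [Submodule.mem_comap, map_sub]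
    rfl

lemma s_congr {H1 H2 : Type} [AddCommGroup H1] [Finite H1] [AddCommGroup H2] [Finite H2]
    {F1 F2 : Type*} [FunLike F1 G H1] [AddMonoidHomClass F1 G H1] [FunLike F2 G H2]
    [AddMonoidHomClass F2 G H2] (φ : F1) (ψ : F2)
    (h : ∀ p : G → ℝ, IsDist p → ent (push φ p) = ent (push ψ p)) {p q : G → ℝ} (hp : IsDist p)
    (hq : IsDist q) : sDouble (push φ p) (push φ q) = sDouble (push ψ p) (push ψ q) := by
  unfold sDouble
  rw [← push_conv, ← push_conv, h p hp, h q hq, h _ (isDist_conv hp hq)]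

lemma lift_s (V : Submodule (ZMod 2) G) (W : Submodule (ZMod 2) (G ⧸ V))
    (V' : Submodule (ZMod 2) G)
    (h : ∀ p : G → ℝ, IsDist p → ent (push V'.mkQ p) = ent (push W.mkQ (push V.mkQ p)))
    {p q : G → ℝ} (hp : IsDist p) (hq : IsDist q) :
    sDouble (push V'.mkQ p) (push V'.mkQ q) =
      sDouble (push W.mkQ (push V.mkQ p)) (push W.mkQ (push V.mkQ q)) := by
  have := s_congr V'.mkQ (W.mkQ.comp V.mkQ) (fun p hp => by
    rw [h p hp, push_push]; rfl) hp hq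
  rw [this, push_push, push_push]
  rfl

end basics

/-- Quantitative form of the reduction property. -/
def PA (η L c : ℝ) : Prop :=
  ∀ (G : Type) [AddCommGroup G] [Module (ZMod 2) G] [Finite G] (p q : G → ℝ),
    IsDist p → IsDist q → η * (ent p + ent q) ≤ sDouble p q →
    ∃ V : Submodule (ZMod 2) G, Real.log (Nat.card V) ≤ L * (ent p + ent q) ∧
      ent (push V.mkQ p) + ent (push V.mkQ q) ≤ (1 - c) * (ent p + ent q)

/-- The reduction property. -/
def AA (η : ℝ) : Prop := ∃ L c : ℝ, 0 ≤ L ∧ 0 < c ∧ c ≤ 1 ∧ PA η L c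

/-- Quantitative form of the regularity property. -/
def PB (η ε L : ℝ) : Prop :=
  ∀ (G : Type) [AddCommGroup G] [Module (ZMod 2) G] [Finite G] (p q : G → ℝ),
    IsDist p → IsDist q →
    ∃ V : Submodule (ZMod 2) G, Real.log (Nat.card V) ≤ L * (ent p + ent q) ∧
      sDouble (push V.mkQ p) (push V.mkQ q) ≤
        η * (ent (push V.mkQ p) + ent (push V.mkQ q)) + ε * (ent p + ent q)

/-- The regularity property. -/
def BB (η : ℝ) : Prop := ∀ ε : ℝ, 0 < ε → ∃ L : ℝ, 0 ≤ L ∧ PB η ε L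

lemma AA_mono {η η' : ℝ} (h : η ≤ η') (hA : AA η) : AA η' := by
  obtain ⟨L, c, hL, hc, hc1, hP⟩ := hA
  refine ⟨L, c, hL, hc, hc1, ?_⟩
  intro G _ _ _ p q hp hq hs
  apply hP G p q hp hq
  have := ent_nonneg hp
  have := ent_nonneg hq
  nlinarith

lemma AA_base : AA (1 / 2 - 1 / 2000) := by
  refine ⟨257, 1 / 2, by norm_num, by norm_num, by norm_num, ?_⟩
  intro G _ _ _ p q hp hq hs
  have := Fintype.ofFinite G
  obtain ⟨V, h1, h2⟩ := pfr hp hq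
  have a1 := ent_nonneg hp
  have a2 := ent_nonneg hq
  refine ⟨V, ?_, ?_⟩
  · unfold dRuzsa at h1
    unfold sDouble at hs
    linarith
  · unfold dRuzsa at h2
    unfold sDouble at hs
    linarith

lemma log_card_bot {G : Type} [AddCommGroup G] [Module (ZMod 2) G] :
    Real.log (Nat.card (⊥ : Submodule (ZMod 2) G)) = 0 := by
  simp

lemma AA_BB_aux {β L c : ℝ} (hc1 : c ≤ 1) (hL : 0 ≤ L) (hP : PA β L c) (N : ℕ) :
    ∀ (G : Type) [AddCommGroup G] [Module (ZMod 2) G] [Finite G] (p q : G → ℝ),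
    IsDist p → IsDist q →
    ∃ V : Submodule (ZMod 2) G, Real.log (Nat.card V) ≤ (N * L) * (ent p + ent q) ∧
      (sDouble (push V.mkQ p) (push V.mkQ q) ≤
        β * (ent (push V.mkQ p) + ent (push V.mkQ q)) ∨
      ent (push V.mkQ p) + ent (push V.mkQ q) ≤ (1 - c) ^ N * (ent p + ent q)) := by
  induction N with
  | zero =>
    intro G _ _ _ p q hp hq
    refine ⟨⊥, ?_, Or.inr ?_⟩
    · rw [log_card_bot]; simp
    · have := ent_push_le (⊥ : Submodule (ZMod 2) G).mkQ hp.1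
      have := ent_push_le (⊥ : Submodule (ZMod 2) G).mkQ hq.1
      rw [pow_zero]
      linarith
  | succ N ih =>
    intro G _ _ _ p q hp hq
    obtain ⟨V, h1, h2⟩ := ih G p q hp hq
    have a1 := ent_nonneg hp
    have a2 := ent_nonneg hq
    have h1' : Real.log (Nat.card V) ≤ ((N + 1 : ℕ) * L) * (ent p + ent q) := by
      push_cast
      nlinarith [mul_nonneg hL (add_nonneg a1 a2)]
    by_cases h3 : sDouble (push V.mkQ p) (push V.mkQ q) ≤
        β * (ent (push V.mkQ p) + ent (push V.mkQ q))
    · exact ⟨V, h1', Or.inl h3⟩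
    · have h4 := h2.resolve_left h3
      have hp' := isDist_push V.mkQ hp
      have hq' := isDist_push V.mkQ hq
      obtain ⟨W, w1, w2⟩ := hP (G ⧸ V) _ _ hp' hq' (le_of_not_ge h3)
      obtain ⟨V', v1, v2⟩ := lift_sub V W
      refine ⟨V', ?_, Or.inr ?_⟩
      · have := ent_push_le V.mkQ hp.1
        have := ent_push_le V.mkQ hq.1
        have h5 : L * (ent (push V.mkQ p) + ent (push V.mkQ q)) ≤ L * (ent p + ent q) :=
          mul_le_mul_of_nonneg_left (by linarith) hL
        push_cast
        linarith
      · rw [v2 p hp, v2 q hq]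
        refine w2.trans ?_
        rw [pow_succ', mul_assoc]
        exact mul_le_mul_of_nonneg_left h4 (by linarith)

lemma AA_BB {β : ℝ} (hβ : 0 ≤ β) (hA : AA β) : BB β := by
  obtain ⟨L, c, hL, hc, hc1, hP⟩ := hA
  intro ε hε
  obtain ⟨N, hN⟩ := exists_pow_lt_of_lt_one hε (show 1 - c < 1 by linarith)
  refine ⟨N * L, by positivity, ?_⟩
  intro G _ _ _ p q hp hq
  have a1 := ent_nonneg hp
  have a2 := ent_nonneg hq
  obtain ⟨V, h1, h2⟩ := AA_BB_aux hc1 hL hP N G p q hp hq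
  have hp' := isDist_push V.mkQ hp
  have hq' := isDist_push V.mkQ hq
  have b1 := ent_nonneg hp'
  have b2 := ent_nonneg hq'
  have z1 : 0 ≤ ε * (ent p + ent q) := by positivity
  refine ⟨V, h1, ?_⟩
  rcases h2 with h2 | h2
  · linarith
  · have h3 := s_le_left hp' hq'
    have h4 : (1 - c) ^ N * (ent p + ent q) ≤ ε * (ent p + ent q) :=
      mul_le_mul_of_nonneg_right hN.le (by positivity)
    have : 0 ≤ β * (ent (push V.mkQ p) + ent (push V.mkQ q)) := by positivity
    linarith

lemma avg_drop_nonneg {ι : Type} [Fintype ι] {G H : Type} [Finite G] [Finite H] {b : ι → ℝ}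
    (hb : IsDist b) {R : ι → G → ℝ} (hR : ∀ w, IsDist (R w)) (φ : G → H) :
    0 ≤ ∑ w, b w * (ent (R w) - ent (push φ (R w))) :=
  Finset.sum_nonneg fun w _ => mul_nonneg (hb.1 w)
    (sub_nonneg.2 (ent_push_le φ (hR w).1))

/-- The conditional reduction lemma. -/
lemma cond_reduce {β g : ℝ} (hβ : 0 < β) (hg : 0 < g) (hB : BB β) (N : ℕ) :
    ∃ L : ℝ, 0 ≤ L ∧ ∀ (G : Type) [AddCommGroup G] [Module (ZMod 2) G] [Finite G]
      (ι : Type) [Fintype ι] (b : ι → ℝ) (R : ι → G → ℝ) (x : G → ℝ) (T θ : ℝ),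
      IsDist b → (∀ w, IsDist (R w)) → IsDist x → 0 ≤ T →
      ent x ≤ N * (g / 2) * T →
      β * (ent x + ∑ w, b w * ent (R w)) + g * T + θ ≤ ∑ w, b w * sDouble x (R w) →
      ∃ V : Submodule (ZMod 2) G, Real.log (Nat.card V) ≤ L * T ∧
        θ ≤ ∑ w, b w * (ent (R w) - ent (push V.mkQ (R w))) := by
  induction N with
  | zero =>
    refine ⟨0, le_rfl, ?_⟩
    intro G _ _ _ ι _ b R x T θ hb hR hx hT h1 h2
    refine ⟨⊥, by rw [log_card_bot]; simp, ?_⟩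
    have h3 := avg_drop_nonneg hb hR (⊥ : Submodule (ZMod 2) G).mkQ
    have h4 : ∑ w, b w * sDouble x (R w) ≤ ∑ w, b w * ent x :=
      sum_dist_mono hb fun w => s_le_left hx (hR w)
    rw [sum_dist_const hb] at h4
    have h5 : 0 ≤ ∑ w, b w * ent (R w) :=
      Finset.sum_nonneg fun w _ => mul_nonneg (hb.1 w) (ent_nonneg (hR w))
    have h6 := ent_nonneg hx
    have h7 : 0 ≤ β * (ent x + ∑ w, b w * ent (R w)) := by positivity
    have h8 : 0 ≤ g * T := by positivity
    simp at h1
    linarith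
  | succ N ih =>
    obtain ⟨L1, hL1, ih⟩ := ih
    set K : ℝ := (1 + 1 / β) * ((N + 1 : ℕ) * (g / 2)) with hK
    have hKpos : 0 < K := by positivity
    obtain ⟨L0, hL0, hPB⟩ := hB (g / (2 * K)) (by positivity)
    refine ⟨L0 * K + L1, by positivity, ?_⟩
    intro G _ _ _ ι _ b R x T θ hb hR hx hT h1 h2
    have x0 := ent_nonneg hx
    by_cases hθ : θ ≤ 0
    · refine ⟨⊥, by rw [log_card_bot]; positivity, ?_⟩
      exact hθ.trans (avg_drop_nonneg hb hR (⊥ : Submodule (ZMod 2) G).mkQ)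
    push Not at hθ
    obtain ⟨w, hw⟩ : ∃ w, g * T + θ ≤ sDouble x (R w) - β * (ent x + ent (R w)) := by
      apply exists_ge_avg hb
      simp_rw [mul_sub, Finset.sum_sub_distrib]
      have : ∑ w, b w * (β * (ent x + ent (R w))) = β * (ent x + ∑ w, b w * ent (R w)) := by
        have hc := sum_dist_const hb (ent x)
        nth_rw 2 [← hc]
        rw [← Finset.sum_add_distrib, Finset.mul_sum]
        apply Finset.sum_congr rfl
        intro w _
        ring
      rw [this]
      linarith
    have r0 := ent_nonneg (hR w)
    have gT : 0 ≤ g * T := by positivity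
    have hRw : β * ent (R w) ≤ ent x := by
      have := s_le_left hx (hR w)
      have : 0 ≤ β * ent x := by positivity
      linarith
    have hsum : ent x + ent (R w) ≤ K * T := by
      have : ent (R w) ≤ 1 / β * ent x := by
        rw [one_div, ← div_eq_inv_mul, le_div_iff₀ hβ]; linarith
      calc ent x + ent (R w) ≤ (1 + 1 / β) * ent x := by linarith
        _ ≤ (1 + 1 / β) * ((N + 1 : ℕ) * (g / 2) * T) :=
          mul_le_mul_of_nonneg_left h1 (by positivity)
        _ = K * T := by rw [hK]; ring
    obtain ⟨V, v1, v2⟩ := hPB G x (R w) hx (hR w)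
    have hx' := isDist_push V.mkQ hx
    have hR' := fun w => isDist_push V.mkQ (hR w)
    have e1 : g / (2 * K) * (ent x + ent (R w)) ≤ g / 2 * T := by
      calc g / (2 * K) * (ent x + ent (R w)) ≤ g / (2 * K) * (K * T) :=
            mul_le_mul_of_nonneg_left hsum (by positivity)
        _ = g / 2 * T := by field_simp
    have d1 := s_drop_left V.mkQ hx (hR w)
    have m1 := ent_push_le V.mkQ hx.1
    have m2 := ent_push_le V.mkQ (hR w).1
    have drop : ent (push V.mkQ x) ≤ N * (g / 2) * T := by
      have : β * (ent (push V.mkQ x) + ent (push V.mkQ (R w))) ≤ β * (ent x + ent (R w)) :=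
        mul_le_mul_of_nonneg_left (by linarith) hβ.le
      push_cast at h1
      linarith
    set D := ∑ w, b w * (ent (R w) - ent (push V.mkQ (R w))) with hD
    have hD' : D = ∑ w, b w * ent (R w) - ∑ w, b w * ent (push V.mkQ (R w)) := by
      rw [hD, ← Finset.sum_sub_distrib]
      simp_rw [mul_sub]
    have D0 : 0 ≤ D := avg_drop_nonneg hb hR V.mkQ
    have sl : ∑ w, b w * sDouble x (R w) ≤
        ∑ w, b w * sDouble (push V.mkQ x) (push V.mkQ (R w)) + D := by
      rw [hD, ← Finset.sum_add_distrib]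
      apply Finset.sum_le_sum
      intro w _
      rw [← mul_add]
      exact mul_le_mul_of_nonneg_left (s_drop_right V.mkQ hx (hR w)) (hb.1 w)
    obtain ⟨W, w1, w2⟩ := ih (G ⧸ V) ι b (fun w => push V.mkQ (R w)) (push V.mkQ x) T (θ - D) hb hR'
      hx' hT drop (by
        have : β * (ent (push V.mkQ x) + ∑ w, b w * ent (push V.mkQ (R w))) ≤
            β * (ent x + ∑ w, b w * ent (R w)) :=
          mul_le_mul_of_nonneg_left (by linarith) hβ.le
        linarith)
    obtain ⟨V', l1, l2⟩ := lift_sub V W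
    refine ⟨V', ?_, ?_⟩
    · have : L0 * (ent x + ent (R w)) ≤ L0 * (K * T) := mul_le_mul_of_nonneg_left hsum hL0
      linarith
    · have : ∑ w, b w * (ent (R w) - ent (push V'.mkQ (R w))) = D +
          ∑ w, b w * (ent (push V.mkQ (R w)) - ent (push W.mkQ (push V.mkQ (R w)))) := by
        rw [hD, ← Finset.sum_add_distrib]
        apply Finset.sum_congr rfl
        intro w _
        rw [l2 _ (hR w)]
        ring
      rw [this]
      linarith

end DS

/-! Part 6: the core of the bootstrapping step. -/

namespace DS

set_option linter.unusedSectionVars false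

/-- The final shape of a reduction. -/
def Red {G : Type} [AddCommGroup G] [Module (ZMod 2) G] (p q : G → ℝ) (L c : ℝ) : Prop :=
  ∃ V : Submodule (ZMod 2) G, Real.log (Nat.card V) ≤ L * (ent p + ent q) ∧
    ent (push V.mkQ p) + ent (push V.mkQ q) ≤ (1 - c) * (ent p + ent q)

lemma core_red {G : Type} [AddCommGroup G] [Module (ZMod 2) G] [Fintype G] {p q b : G → ℝ}
    (hp : IsDist p) {R : G → G → ℝ} (hb : IsDist b) (hR : ∀ w, IsDist (R w))
    (mR : mix b R = q) {L θ c : ℝ} (hc : c * (ent p + ent q) ≤ θ)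
    (h : ∃ V : Submodule (ZMod 2) G, Real.log (Nat.card V) ≤ L * (ent p + ent q) ∧
      θ ≤ ∑ w, b w * (ent (R w) - ent (push V.mkQ (R w)))) : Red p q L c := by
  obtain ⟨V, h1, h2⟩ := h
  refine ⟨V, h1, ?_⟩
  have h3 := avg_drop_le hb hR V.mkQ
  rw [mR] at h3
  have h4 := ent_push_le V.mkQ hp.1
  linarith

/-- The core argument. -/
lemma core {β κ : ℝ} (hβ : 0 < β) (hβ2 : β < 1 / 2) (hκ : κ = β ^ 2 * (1 - 2 * β) / 100)
    (hB : BB β) :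
    ∃ L : ℝ, 0 ≤ L ∧ ∀ (G : Type) [AddCommGroup G] [Module (ZMod 2) G] [Finite G] (p q : G → ℝ),
      IsDist p → IsDist q →
      2 * ent (conv p q) ≤ ent (conv p p) + ent (conv q q) →
      (β - κ) * (ent p + ent q) ≤ sDouble p q →
      sDouble (conv p p) (conv q q) ≤
        β * (ent (conv p p) + ent (conv q q)) + κ * (ent p + ent q) →
      Red p q L (κ / 2) := by
  have hγ : 0 < 1 - 2 * β := by linarith
  have hκ0 : 0 < κ := by rw [hκ]; positivity
  have hκβ : κ ≤ β ^ 2 / 100 := by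
    rw [hκ]
    have : β ^ 2 * (1 - 2 * β) ≤ β ^ 2 * 1 := mul_le_mul_of_nonneg_left (by linarith) (by positivity)
    linarith
  obtain ⟨N, hN⟩ := exists_nat_ge (4 / (κ * β))
  obtain ⟨L1, hL1, hcond⟩ := cond_reduce (g := κ / 2) hβ (by positivity) hB N
  obtain ⟨L2, hL2, hPB⟩ := hB κ hκ0
  refine ⟨L1 + L2 * ((1 - 2 * β) / κ), by positivity, ?_⟩
  intro G _ _ _ p q hp hq hm hs hs2
  have := Fintype.ofFinite G
  obtain ⟨P, R, hP, hR, mP, mR, eP, eR, hI, hBSG⟩ := package hp hq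
  have ha := isDist_conv hp hp
  have hb := isDist_conv hq hq
  have hab := isDist_prod ha hb
  have p0 := ent_nonneg hp
  have q0 := ent_nonneg hq
  have hT0 : 0 ≤ ent p + ent q := by linarith
  have qb := ent_le_conv_left hq hq
  have pa := ent_le_conv_left hp hp
  set T := ent p + ent q with hT
  set a := conv p p
  set b := conv q q
  set e := ∑ z : G × G, prodDist a b z * ent (conv (P z.1) (R z.2)) with he
  set c1 := ent (conv p q) with hc1
  set c2 := ent (conv a b) with hc2
  have c1T : c1 ≤ T := ent_conv_le hp hq
  have hs' : (β - κ) * T ≤ T - c1 := hs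
  have hs2' : ent a + ent b - c2 ≤ β * (ent a + ent b) + κ * T := hs2
  have c20 : 0 ≤ c2 := ent_nonneg (isDist_conv ha hb)
  have κT : 0 ≤ κ * T := by positivity
  have bR : ∑ w, b w * ent (R w) ≤ T := by rw [eR]; linarith
  -- the average of the conditional doubling masses
  have avg_s : ∑ u, a u * (∑ w, b w * sDouble (P u) (R w)) = 2 * T - (ent a + ent b) - e := by
    have s1 := sum_prod_fst (p := a) hb (fun u => ent (P u))
    have s2 := sum_prod_snd (q := b) ha (fun u => ent (R u))
    have : ∑ u, a u * (∑ w, b w * sDouble (P u) (R w)) =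
        ∑ z : G × G, prodDist a b z * (ent (P z.1)) + ∑ z : G × G, prodDist a b z * (ent (R z.2))
          - e := by
      rw [he, ← Finset.sum_add_distrib, ← Finset.sum_sub_distrib, Fintype.sum_prod_type]
      apply Finset.sum_congr rfl
      intro u _
      rw [Finset.mul_sum]
      apply Finset.sum_congr rfl
      intro w _
      unfold sDouble prodDist
      ring
    rw [this, s1, s2, eP, eR]
    ring
  have s2low : β * (2 * T - (ent a + ent b)) + (2 * c1 - e - c2) - 3 * (κ * T) ≤
      2 * T - (ent a + ent b) - e := by linarith
  by_cases hcase : 4 * (κ * T) ≤ 2 * c1 - e - c2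
  · -- large mutual information
    obtain ⟨u, hu⟩ : ∃ u, κ * T ≤ (∑ w, b w * sDouble (P u) (R w)) -
        β * (ent (P u) + ∑ w, b w * ent (R w)) := by
      apply exists_ge_avg ha
      have : ∑ u, a u * ((∑ w, b w * sDouble (P u) (R w)) -
        β * (ent (P u) + ∑ w, b w * ent (R w))) =
        ∑ u, a u * (∑ w, b w * sDouble (P u) (R w)) - β * (∑ u, a u * ent (P u)) -
          β * ∑ u, a u * (∑ w, b w * ent (R w)) := by
        rw [Finset.mul_sum, Finset.mul_sum, ← Finset.sum_sub_distrib, ← Finset.sum_sub_distrib]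
        apply Finset.sum_congr rfl
        intro u _
        ring
      rw [this, sum_dist_const ha, avg_s, eP, eR]
      linarith
    have hsR : ∑ w, b w * sDouble (P u) (R w) ≤ T :=
      (sum_dist_mono hb fun w => s_le_right (hP u) (hR w)).trans bR
    have r0 : 0 ≤ ∑ w, b w * ent (R w) :=
      Finset.sum_nonneg fun w _ => mul_nonneg (hb.1 w) (ent_nonneg (hR w))
    have hPu : ent (P u) ≤ N * (κ / 2 / 2) * T := by
      have h1 : β * ent (P u) ≤ T := by
        have : 0 ≤ β * ∑ w, b w * ent (R w) := by positivity
        linarith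
      have h2 : 1 ≤ N * (κ / 4) * β := by
        rw [div_le_iff₀ (by positivity)] at hN
        linarith
      have h3 : ent (P u) ≤ (N * (κ / 4) * β) * ent (P u) :=
        le_mul_of_one_le_left (ent_nonneg (hP u)) h2
      have h4 : (N * (κ / 4)) * (β * ent (P u)) ≤ (N * (κ / 4)) * T :=
        mul_le_mul_of_nonneg_left h1 (by positivity)
      linarith
    apply core_red hp hb hR mR (θ := κ / 2 * T) le_rfl
    obtain ⟨V, v1, v2⟩ := hcond G G b R (P u) T (κ / 2 * T) hb hR (hP u) hT0 hPu (by linarith)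
    refine ⟨V, v1.trans ?_, v2⟩
    apply mul_le_mul_of_nonneg_right _ hT0
    have : 0 ≤ L2 * ((1 - 2 * β) / κ) := by positivity
    linarith
  · -- small mutual information
    push Not at hcase
    have hQ : ∀ z : G × G, IsDist (conv (P z.1) (R z.2)) := fun z => isDist_conv (hP _) (hR _)
    set E2 := ∑ z : G × G, prodDist a b z *
      ent (conv (conv (P z.1) (R z.2)) (conv (P z.1) (R z.2))) with hE2
    have dpos : e ≤ E2 := sum_dist_mono hab fun z => ent_le_conv_left (hQ z) (hQ z)
    have e2T : e ≤ 2 * T := by linarith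
    have hma : ent a + ent b ≤ 2 * T - 2 * (β - κ) * T + 12 * (κ * T) := by linarith
    have hlow : (2 * β ^ 2) * T - 10 * (κ * T) ≤ 2 * T - (ent a + ent b) - e := by
      have h1 : β * (2 * (β - κ) * T - 12 * (κ * T)) ≤ β * (2 * T - (ent a + ent b)) :=
        mul_le_mul_of_nonneg_left (by linarith) hβ.le
      have h2 : β * (κ * T) ≤ 1 / 2 * (κ * T) := mul_le_mul_of_nonneg_right hβ2.le κT
      nlinarith
    obtain ⟨z, hz⟩ : ∃ z : G × G, β ^ 2 * T ≤ (∑ w, b w * sDouble (P z.1) (R w)) -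
        (ent (conv (conv (P z.1) (R z.2)) (conv (P z.1) (R z.2))) - ent (conv (P z.1) (R z.2))
          + 2 * κ * ent (conv (P z.1) (R z.2))) / (1 - 2 * β) := by
      apply exists_ge_avg hab
      have : ∑ z : G × G, prodDist a b z * ((∑ w, b w * sDouble (P z.1) (R w)) -
        (ent (conv (conv (P z.1) (R z.2)) (conv (P z.1) (R z.2))) - ent (conv (P z.1) (R z.2))
          + 2 * κ * ent (conv (P z.1) (R z.2))) / (1 - 2 * β)) =
          ∑ z : G × G, prodDist a b z * (∑ w, b w * sDouble (P z.1) (R w))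
            - (E2 - e + 2 * κ * e) / (1 - 2 * β) := by
        rw [hE2, he, Finset.mul_sum, ← Finset.sum_sub_distrib, ← Finset.sum_add_distrib,
          Finset.sum_div, ← Finset.sum_sub_distrib]
        apply Finset.sum_congr rfl
        intro z _
        ring
      rw [this, sum_prod_fst (p := a) hb (fun u => ∑ w, b w * sDouble (P u) (R w)), avg_s]
      have h1 : (E2 - e + 2 * κ * e) / (1 - 2 * β) ≤ 16 * β ^ 2 / 100 * T := by
        rw [div_le_iff₀ hγ]
        have h3 : κ * e ≤ κ * (2 * T) := mul_le_mul_of_nonneg_left e2T hκ0.le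
        have h2 : 16 * β ^ 2 / 100 * T * (1 - 2 * β) = 16 * (κ * T) := by rw [hκ]; ring
        linarith
      have h4 : κ * T ≤ β ^ 2 / 100 * T := mul_le_mul_of_nonneg_right hκβ hT0
      have h5 : 0 ≤ β ^ 2 * T := by positivity
      linarith
    set Q := conv (P z.1) (R z.2) with hQdef
    have hQz : IsDist Q := hQ z
    have Q0 := ent_nonneg hQz
    have dQ := ent_le_conv_left hQz hQz
    have hsR : ∑ w, b w * sDouble (P z.1) (R w) ≤ T :=
      (sum_dist_mono hb fun w => s_le_right (hP z.1) (hR w)).trans bR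
    have hbbT : 0 ≤ β ^ 2 * T := by positivity
    have hQle : 2 * κ * ent Q ≤ (1 - 2 * β) * T := by
      have h1 : (ent (conv Q Q) - ent Q + 2 * κ * ent Q) / (1 - 2 * β) ≤ T := by linarith
      rw [div_le_iff₀ hγ] at h1
      linarith
    obtain ⟨V, v1, v2⟩ := hPB G Q Q hQz hQz
    have hQV := isDist_push V.mkQ hQz
    have hpr := ent_proj V.mkQ hQz hQz
    have hPV : ent (push V.mkQ (P z.1)) ≤ ent (push V.mkQ Q) := by
      rw [hQdef, push_conv]
      exact ent_le_conv_left (isDist_push _ (hP _)) (isDist_push _ (hR _))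
    have hPV2 : ent (push V.mkQ (P z.1)) ≤
        (ent (conv Q Q) - ent Q + 2 * κ * ent Q) / (1 - 2 * β) := by
      refine hPV.trans ?_
      rw [le_div_iff₀ hγ]
      unfold sDouble at v2
      linarith
    apply core_red hp hb hR mR (θ := β ^ 2 * T)
    · have h4 : κ * T ≤ β ^ 2 / 100 * T := mul_le_mul_of_nonneg_right hκβ hT0
      change κ / 2 * T ≤ β ^ 2 * T
      linarith
    · refine ⟨V, ?_, ?_⟩
      · change _ ≤ (L1 + L2 * ((1 - 2 * β) / κ)) * T
        have h1 : ent Q + ent Q ≤ (1 - 2 * β) / κ * T := by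
          rw [div_mul_eq_mul_div, le_div_iff₀ hκ0]
          linarith
        have h2 := mul_le_mul_of_nonneg_left h1 hL2
        have h3 : 0 ≤ L1 * T := by positivity
        linarith
      · have h1 : ∑ w, b w * sDouble (P z.1) (R w) ≤
            ∑ w, b w * (ent (push V.mkQ (P z.1)) + (ent (R w) - ent (push V.mkQ (R w)))) := by
          apply sum_dist_mono hb
          intro w
          have h2 := s_drop_right V.mkQ (hP z.1) (hR w)
          have h3 := s_le_left (isDist_push V.mkQ (hP z.1)) (isDist_push V.mkQ (hR w))
          linarith
        simp_rw [mul_add] at h1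
        rw [Finset.sum_add_distrib, sum_dist_const hb] at h1
        linarith

end DS

/-! Part 7: the bootstrapping step and its iteration. -/

namespace DS

set_option linter.unusedSectionVars false

lemma preproc {β κ : ℝ} (hκ : 0 < κ) (hB : BB β) : ∃ L : ℝ, 0 ≤ L ∧
    ∀ (G : Type) [AddCommGroup G] [Module (ZMod 2) G] [Finite G] (p q : G → ℝ),
    IsDist p → IsDist q → ∃ V : Submodule (ZMod 2) G,
      Real.log (Nat.card V) ≤ L * (ent p + ent q) ∧
      sDouble (conv (push V.mkQ p) (push V.mkQ p)) (conv (push V.mkQ q) (push V.mkQ q)) ≤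
        β * (ent (conv (push V.mkQ p) (push V.mkQ p)) + ent (conv (push V.mkQ q) (push V.mkQ q)))
          + κ / 2 * (ent p + ent q) := by
  obtain ⟨L, hL, hP⟩ := hB (κ / 4) (by positivity)
  refine ⟨2 * L, by positivity, ?_⟩
  intro G _ _ _ p q hp hq
  obtain ⟨V, h1, h2⟩ := hP G _ _ (isDist_conv hp hp) (isDist_conv hq hq)
  have e1 := ent_conv_le hp hp
  have e2 := ent_conv_le hq hq
  have hm : ent (conv p p) + ent (conv q q) ≤ 2 * (ent p + ent q) := by linarith
  refine ⟨V, ?_, ?_⟩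
  · have := mul_le_mul_of_nonneg_left hm hL
    linarith
  · rw [push_conv, push_conv] at h2
    have := mul_le_mul_of_nonneg_left hm (show 0 ≤ κ / 4 by positivity)
    linarith

lemma stepS {β κ : ℝ} (hβ : 0 < β) (hβ2 : β < 1 / 2) (hκ : κ = β ^ 2 * (1 - 2 * β) / 100)
    (hB : BB β) : ∃ L : ℝ, 0 ≤ L ∧
    ∀ (G : Type) [AddCommGroup G] [Module (ZMod 2) G] [Finite G] (p : G → ℝ), IsDist p →
      (β - κ / 2) * (ent p + ent p) ≤ sDouble p p → Red p p L (κ / 4) := by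
  have hκ0 : 0 < κ := by
    rw [hκ]
    have : 0 < 1 - 2 * β := by linarith
    positivity
  have hκβ : κ < β := by
    rw [hκ]
    nlinarith [mul_pos hβ hβ, mul_pos (mul_pos hβ hβ) hβ]
  obtain ⟨L1, hL1, hP1⟩ := preproc hκ0 hB
  obtain ⟨L2, hL2, hP2⟩ := core hβ hβ2 hκ hB
  refine ⟨L1 + L2, by positivity, ?_⟩
  intro G _ _ _ p hp hs
  obtain ⟨V, h1, h2⟩ := hP1 G p p hp hp
  have a := ent_nonneg hp
  have hp' := isDist_push V.mkQ hp
  have b := ent_nonneg hp'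
  have le := ent_push_le V.mkQ hp.1
  by_cases hc : ent (push V.mkQ p) + ent (push V.mkQ p) ≤ (1 - κ / 4) * (ent p + ent p)
  · refine ⟨V, ?_, hc⟩
    nlinarith [mul_nonneg hL2 a]
  · push Not at hc
    have sd := s_drop_left V.mkQ hp hp
    have hx : κ / 2 * (ent p + ent p) ≤ κ * (ent (push V.mkQ p) + ent (push V.mkQ p)) := by
      have : ent p ≤ 2 * ent (push V.mkQ p) := by nlinarith
      nlinarith
    obtain ⟨W, w1, w2⟩ := hP2 (G ⧸ V) _ _ hp' hp' (by linarith) (by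
      have : (β - κ) * ent (push V.mkQ p) ≤ (β - κ) * ent p :=
        mul_le_mul_of_nonneg_left le (by linarith)
      nlinarith) (by linarith)
    obtain ⟨V', v1, v2⟩ := lift_sub V W
    refine ⟨V', ?_, ?_⟩
    · have := mul_le_mul_of_nonneg_left le hL2
      linarith
    · rw [v2 p hp]
      nlinarith

lemma red_of_self {G : Type} [AddCommGroup G] [Module (ZMod 2) G] [Finite G] {x y : G → ℝ}
    (hx : IsDist x) (hy : IsDist y) {L κ : ℝ} (hL : 0 ≤ L) (hκ : 0 < κ)
    (hr : Red x x L (κ / 4)) (h : κ / 8 * (ent x + ent y) ≤ ent x) :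
    Red x y (2 * L) (κ ^ 2 / 32) := by
  obtain ⟨V, h1, h2⟩ := hr
  have a := ent_nonneg hx
  have b := ent_nonneg hy
  have le := ent_push_le V.mkQ hy.1
  refine ⟨V, ?_, ?_⟩
  · nlinarith [mul_nonneg hL b]
  · nlinarith

lemma Red_symm {G : Type} [AddCommGroup G] [Module (ZMod 2) G] {x y : G → ℝ} {L c : ℝ}
    (h : Red x y L c) : Red y x L c := by
  obtain ⟨V, h1, h2⟩ := h
  exact ⟨V, by linarith, by linarith⟩

lemma Red_mono {G : Type} [AddCommGroup G] [Module (ZMod 2) G] {x y : G → ℝ} {L c L' c' : ℝ}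
    (h : Red x y L c) (hL : L ≤ L') (hc : c' ≤ c) (ht : 0 ≤ ent x + ent y) : Red x y L' c' := by
  obtain ⟨V, h1, h2⟩ := h
  exact ⟨V, h1.trans (mul_le_mul_of_nonneg_right hL ht),
    h2.trans (mul_le_mul_of_nonneg_right (by linarith) ht)⟩

lemma step {β κ : ℝ} (hβ : 0 < β) (hβ2 : β < 1 / 2) (hκ : κ = β ^ 2 * (1 - 2 * β) / 100)
    (hA : AA β) : AA (β - κ / 4) := by
  have hB := AA_BB hβ.le hA
  have hκ0 : 0 < κ := by
    rw [hκ]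
    have : 0 < 1 - 2 * β := by linarith
    positivity
  have hκβ : κ < β := by
    rw [hκ]
    nlinarith [mul_pos hβ hβ, mul_pos (mul_pos hβ hβ) hβ]
  obtain ⟨L1, hL1, hP1⟩ := preproc hκ0 hB
  obtain ⟨L2, hL2, hP2⟩ := core hβ hβ2 hκ hB
  obtain ⟨L3, hL3, hP3⟩ := stepS hβ hβ2 hκ hB
  have hk2 : κ ^ 2 ≤ κ / 2 := by nlinarith
  refine ⟨L1 + (L2 + 2 * L3), κ ^ 2 / 64, by positivity, by positivity, by nlinarith, ?_⟩
  intro G _ _ _ p q hp hq hs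
  obtain ⟨V, h1, h2⟩ := hP1 G p q hp hq
  have a := ent_nonneg hp
  have a' := ent_nonneg hq
  have hp' := isDist_push V.mkQ hp
  have hq' := isDist_push V.mkQ hq
  have b := ent_nonneg hp'
  have b' := ent_nonneg hq'
  have le := ent_push_le V.mkQ hp.1
  have le' := ent_push_le V.mkQ hq.1
  have sd := s_drop_left V.mkQ hp hq
  have sd' := s_drop_right V.mkQ hp hq
  by_cases hc : ent (push V.mkQ p) + ent (push V.mkQ q) ≤ (1 - κ ^ 2 / 64) * (ent p + ent q)
  · refine ⟨V, ?_, hc⟩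
    have : 0 ≤ (L2 + 2 * L3) * (ent p + ent q) := by positivity
    linarith
  · push Not at hc
    have key : Red (push V.mkQ p) (push V.mkQ q) (L2 + 2 * L3) (κ ^ 2 / 32) := by
      generalize push V.mkQ p = x at *
      generalize push V.mkQ q = y at *
      have hT : (ent p + ent q) ≤ 2 * (ent x + ent y) := by nlinarith
      have hx : κ / 2 * (ent p + ent q) ≤ κ * (ent x + ent y) := by nlinarith
      have hs' : (β - 3 * κ / 8) * (ent x + ent y) ≤ sDouble x y := by
        have e1 : (β - 3 * κ / 8) * (ent x + ent y) ≤ (β - 3 * κ / 8) * (ent p + ent q) :=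
          mul_le_mul_of_nonneg_left (by linarith) (by linarith)
        have e2 : κ ^ 2 / 64 * (ent p + ent q) ≤ κ / 2 / 64 * (ent p + ent q) :=
          mul_le_mul_of_nonneg_right (by linarith) (by linarith)
        nlinarith [mul_nonneg hκ0.le (add_nonneg a a')]
      by_cases hm : 2 * ent (conv x y) ≤ ent (conv x x) + ent (conv y y)
      · refine Red_mono (hP2 (G ⧸ V) x y hp' hq' hm ?_ ?_) (by linarith) (by linarith)
          (by linarith)
        · nlinarith [mul_nonneg hκ0.le (add_nonneg b b')]
        · linarith
      · push Not at hm
        have sx := s_le_left hp' hp'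
        have sy := s_le_left hq' hq'
        have e : sDouble x x + sDouble y y = 2 * (ent x + ent y) - (ent (conv x x) + ent (conv y y)) := by
          unfold sDouble; ring
        have e' : sDouble x y = ent x + ent y - ent (conv x y) := rfl
        have hT0 : 0 ≤ κ * (ent x + ent y) := by positivity
        have c1 : 0 ≤ (β - κ / 2) * ent x := mul_nonneg (by linarith) b
        have c2 : 0 ≤ (β - κ / 2) * ent y := mul_nonneg (by linarith) b'
        rcases le_total (κ / 8 * (ent x + ent y)) (sDouble x x - (β - κ / 2) * (ent x + ent x))
          with h | h
        · have r := hP3 (G ⧸ V) x hp' (by linarith)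
          exact Red_mono (red_of_self hp' hq' hL3 hκ0 r (by linarith)) (by linarith) le_rfl
            (by linarith)
        · have h' : κ / 8 * (ent x + ent y) ≤ sDouble y y - (β - κ / 2) * (ent y + ent y) := by
            linarith
          have r := hP3 (G ⧸ V) y hq' (by linarith)
          exact Red_mono (Red_symm (red_of_self hq' hp' hL3 hκ0 r (by linarith))) (by linarith)
            le_rfl (by linarith)
    obtain ⟨W, w1, w2⟩ := key
    obtain ⟨V', v1, v2⟩ := lift_sub V W
    refine ⟨V', ?_, ?_⟩
    · have : (L2 + 2 * L3) * (ent (push V.mkQ p) + ent (push V.mkQ q)) ≤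
          (L2 + 2 * L3) * (ent p + ent q) :=
        mul_le_mul_of_nonneg_left (by linarith) (by positivity)
      linarith
    · rw [v2 p hp, v2 q hq]
      have : (1 - κ ^ 2 / 32) * (ent (push V.mkQ p) + ent (push V.mkQ q)) ≤
          (1 - κ ^ 2 / 32) * (ent p + ent q) :=
        mul_le_mul_of_nonneg_left (by linarith) (by nlinarith)
      have : 0 ≤ κ ^ 2 * (ent p + ent q) := by positivity
      linarith

lemma AA_iter {η : ℝ} (hη : 0 < η) (hη' : η ≤ 1 / 2 - 1 / 2000) (n : ℕ) :
    AA (max η (1 / 2 - 1 / 2000 - n * (η ^ 2 / 400000))) := by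
  induction n with
  | zero => exact AA_mono (by simp) AA_base
  | succ n ih =>
    set β := max η (1 / 2 - 1 / 2000 - n * (η ^ 2 / 400000)) with hβ
    have h1 : η ≤ β := le_max_left _ _
    have h2 : β ≤ 1 / 2 - 1 / 2000 := max_le hη' (by
      have : 0 ≤ n * (η ^ 2 / 400000) := by positivity
      linarith)
    have h3 := step (by linarith) (by linarith) rfl ih
    have h5 : η ^ 2 / 100000 ≤ β ^ 2 * (1 - 2 * β) / 100 := by
      have : η ^ 2 ≤ β ^ 2 := by gcongr
      have : η ^ 2 * (1 / 1000) ≤ β ^ 2 * (1 - 2 * β) :=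
        mul_le_mul this (by linarith) (by norm_num) (by positivity)
      linarith
    refine AA_mono ?_ h3
    push_cast
    rcases max_choice η (1 / 2 - 1 / 2000 - n * (η ^ 2 / 400000)) with h | h
    · rw [← hβ] at h
      refine le_trans ?_ (le_max_left _ _)
      have : 0 ≤ η ^ 2 := by positivity
      linarith
    · rw [← hβ] at h
      refine le_trans ?_ (le_max_right _ _)
      linarith

lemma AA_all {η : ℝ} (hη : 0 < η) : AA η := by
  rcases le_total η (1 / 2 - 1 / 2000) with h | h
  · obtain ⟨n, hn⟩ := exists_nat_gt (1 / (η ^ 2 / 400000))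
    have h0 : 0 < η ^ 2 / 400000 := by positivity
    rw [div_lt_iff₀ h0] at hn
    refine AA_mono (max_le le_rfl ?_) (AA_iter hη h n)
    linarith
  · exact AA_mono h AA_base

end DS

/-! Part 8: conclusion. -/

namespace DS

set_option linter.unusedSectionVars false

section sums

variable {G : Type} [AddCommGroup G] [Finite G]

/-- Distribution of the sum of `j + 1` independent copies. -/
def cpow (p : G → ℝ) : ℕ → G → ℝ
  | 0 => p
  | j + 1 => conv p (cpow p j)

lemma isDist_cpow {p : G → ℝ} (hp : IsDist p) (j : ℕ) : IsDist (cpow p j) := by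
  induction j with
  | zero => exact hp
  | succ j ih => exact isDist_conv hp ih

lemma push_cpow {G' : Type} [AddCommGroup G'] [Finite G'] {F : Type*} [FunLike F G G']
    [AddMonoidHomClass F G G'] (φ : F) (p : G → ℝ) (j : ℕ) :
    push φ (cpow p j) = cpow (push φ p) j := by
  induction j with
  | zero => rfl
  | succ j ih => simp only [cpow]; rw [push_conv, ih]

lemma ent_cpow_le {p : G → ℝ} (hp : IsDist p) (j : ℕ) : ent (cpow p j) ≤ (j + 1) * ent p := by
  induction j with
  | zero => simp [cpow]
  | succ j ih =>
    have := ent_conv_le hp (isDist_cpow hp j)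
    simp only [cpow]
    push_cast
    linarith

lemma ent_cpow_ge {p : G → ℝ} (hp : IsDist p) {η : ℝ} (hη : 0 ≤ η) {K : ℕ}
    (h : ∀ j < K, sDouble p (cpow p j) ≤ η * (ent p + ent (cpow p j))) (m : ℕ) (hm : m ≤ K) :
    (m + 1) * ent p - m * (η * ((K + 1) * ent p)) ≤ ent (cpow p m) := by
  induction m with
  | zero => simp [cpow]
  | succ m ih =>
    have h1 := ih (by omega)
    have h2 := h m (by omega)
    have h3 := ent_cpow_le hp m
    have hmK : (m : ℝ) + 1 ≤ K := by exact_mod_cast hm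
    have h4 : ent p + ent (cpow p m) ≤ (K + 1) * ent p := by
      nlinarith [ent_nonneg hp]
    have h5 := mul_le_mul_of_nonneg_left h4 hη
    unfold sDouble at h2
    simp only [cpow]
    push_cast
    linarith

lemma indepSum_one (p : G → ℝ) : indepSum 1 (fun _ => p) = p := by
  unfold indepSum
  have := push_equiv (Equiv.funUnique (Fin 1) G) (fun x => ∏ i, p (x i))
  have e : (fun x : Fin 1 → G => ∑ i, x i) = fun x => Equiv.funUnique (Fin 1) G x := by
    funext x; simp
  rw [e, this]
  funext b
  simp

lemma indepSum_succ (p : G → ℝ) (k : ℕ) :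
    indepSum (k + 1) (fun _ => p) = conv p (indepSum k (fun _ => p)) := by
  rw [conv_eq_push]
  unfold indepSum
  have h1 := push_prod (fun a : G => a) (fun x : Fin k → G => ∑ i, x i) p
    (fun x => ∏ i, p (x i))
  rw [push_id] at h1
  rw [← h1, push_push]
  have h2 := push_equiv (Fin.insertNthEquiv (fun _ : Fin (k + 1) => G) 0).symm
    (fun x => ∏ i, p (x i))
  have h3 : prodDist p (fun x : Fin k → G => ∏ i, p (x i)) =
      push (fun x => (Fin.insertNthEquiv (fun _ : Fin (k + 1) => G) 0).symm x)
        (fun x => ∏ i, p (x i)) := by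
    rw [h2]
    funext z
    simp [prodDist, Fin.prod_univ_succ]
  rw [h3, push_push]
  congr 1
  funext x
  simp [Fin.sum_univ_succ, Fin.tail]

lemma indepSum_eq (p : G → ℝ) (k : ℕ) : indepSum (k + 1) (fun _ => p) = cpow p k := by
  induction k with
  | zero => exact indepSum_one p
  | succ k ih => rw [indepSum_succ, ih]; rfl

lemma ent_unif [Module (ZMod 2) G] (V : Submodule (ZMod 2) G) :
    ent (unifOn (V : Set G)) = Real.log (Nat.card V) := by
  classical
  have := Fintype.ofFinite G
  have hV : (0 : ℝ) < Nat.card V := by exact_mod_cast Nat.card_pos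
  rw [ent_eq_sum]
  have h1 : ∀ a : G, Real.negMulLog (unifOn (V : Set G) a) =
      if a ∈ V then (Nat.card V : ℝ)⁻¹ * Real.log (Nat.card V) else 0 := by
    intro a
    unfold unifOn
    by_cases h : a ∈ V
    · rw [Set.indicator_of_mem (by exact h), if_pos h, Real.negMulLog, Real.log_inv]
      simp
    · rw [Set.indicator_of_notMem (by exact h), if_neg h, Real.negMulLog_zero]
  simp only [h1]
  rw [← Finset.sum_filter, Finset.sum_const, nsmul_eq_mul]
  have h2 : (Finset.univ.filter (fun a : G => a ∈ V)).card = Nat.card V := by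
    rw [Nat.card_eq_fintype_card, Fintype.card_subtype]
  rw [h2]
  field_simp

end sums

/-- The potential. -/
def Pot {G H : Type} [AddCommGroup G] (f : G → H) (p : G → ℝ) (K : ℕ) : ℝ :=
  ∑ j ∈ Finset.range K, (ent (push f p) + ent (push f (cpow p j)))

lemma main_aux {ε η L c : ℝ} (hc : 0 < c) (hL : 0 ≤ L) (hP : PA η L c) (K : ℕ)
    (N : ℕ) (G : Type) [AddCommGroup G] [Module (ZMod 2) G] [Finite G] (p : G → ℝ)
    (hp : IsDist p) :
    ∃ V : Submodule (ZMod 2) G, Real.log (Nat.card V) ≤ (N * (L * (K + 1))) * ent p ∧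
      (ent (push V.mkQ p) ≤ ε * ent p ∨
      (∀ j < K, sDouble (push V.mkQ p) (cpow (push V.mkQ p) j) ≤
        η * (ent (push V.mkQ p) + ent (cpow (push V.mkQ p) j))) ∨
      Pot V.mkQ p K ≤ K * ((K + 1) * ent p) - N * (c * (ε * ent p))) := by
  have a := ent_nonneg hp
  induction N with
  | zero =>
    refine ⟨⊥, ?_, Or.inr (Or.inr ?_)⟩
    · rw [log_card_bot]; simp
    · unfold Pot
      have : ∀ j ∈ Finset.range K, ent (push (⊥ : Submodule (ZMod 2) G).mkQ p) +
          ent (push (⊥ : Submodule (ZMod 2) G).mkQ (cpow p j)) ≤ (K + 1) * ent p := by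
        intro j hj
        have h1 := ent_push_le (⊥ : Submodule (ZMod 2) G).mkQ hp.1
        have h2 := ent_push_le (⊥ : Submodule (ZMod 2) G).mkQ (isDist_cpow hp j).1
        have h3 := ent_cpow_le hp j
        have h4 : (j : ℝ) + 1 ≤ K := by exact_mod_cast Finset.mem_range.1 hj
        nlinarith
      have := Finset.sum_le_card_nsmul _ _ _ this
      simp only [Finset.card_range, nsmul_eq_mul] at this
      simpa using this
  | succ N ih =>
    obtain ⟨V, h1, h2⟩ := ih
    have h1' : Real.log (Nat.card V) ≤ ((N + 1 : ℕ) * (L * (K + 1))) * ent p := by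
      push_cast
      have : 0 ≤ (L * (K + 1)) * ent p := by positivity
      linarith
    by_cases hs : ent (push V.mkQ p) ≤ ε * ent p
    · exact ⟨V, h1', Or.inl hs⟩
    by_cases hd : ∀ j < K, sDouble (push V.mkQ p) (cpow (push V.mkQ p) j) ≤
        η * (ent (push V.mkQ p) + ent (cpow (push V.mkQ p) j))
    · exact ⟨V, h1', Or.inr (Or.inl hd)⟩
    have h3 := (h2.resolve_left hs).resolve_left hd
    push Not at hd hs
    obtain ⟨j, hj, hv⟩ := hd
    have hp' := isDist_push V.mkQ hp
    have hq' := isDist_cpow hp' j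
    obtain ⟨W, w1, w2⟩ := hP (G ⧸ V) _ _ hp' hq' hv.le
    obtain ⟨V', v1, v2⟩ := lift_sub V W
    refine ⟨V', ?_, Or.inr (Or.inr ?_)⟩
    · have e1 := ent_push_le V.mkQ hp.1
      have e2 := ent_cpow_le hp' j
      have hjK : (j : ℝ) + 1 ≤ K := by exact_mod_cast hj
      have e3 : ent (push V.mkQ p) + ent (cpow (push V.mkQ p) j) ≤ (K + 1) * ent p := by
        have := ent_nonneg hp'
        nlinarith
      have := mul_le_mul_of_nonneg_left e3 hL
      push_cast
      linarith
    · have hle : Pot V'.mkQ p K ≤ Pot V.mkQ p K - c * (ε * ent p) := by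
        unfold Pot
        have hjm := Finset.mem_range.2 hj
        rw [← Finset.add_sum_erase _ _ hjm, ← Finset.add_sum_erase (Finset.range K)
          (fun j => ent (push V.mkQ p) + ent (push V.mkQ (cpow p j))) hjm]
        have t1 : ∑ x ∈ (Finset.range K).erase j,
            (ent (push V'.mkQ p) + ent (push V'.mkQ (cpow p x))) ≤
            ∑ x ∈ (Finset.range K).erase j,
            (ent (push V.mkQ p) + ent (push V.mkQ (cpow p x))) := by
          apply Finset.sum_le_sum
          intro i _
          rw [v2 p hp, v2 _ (isDist_cpow hp i)]
          exact add_le_add (ent_push_le W.mkQ hp'.1)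
            (ent_push_le W.mkQ (isDist_push V.mkQ (isDist_cpow hp i)).1)
        have t2 : ent (push V'.mkQ p) + ent (push V'.mkQ (cpow p j)) ≤
            ent (push V.mkQ p) + ent (push V.mkQ (cpow p j)) - c * (ε * ent p) := by
          rw [v2 p hp, v2 _ (isDist_cpow hp j), push_cpow V.mkQ p j]
          have := ent_nonneg hq'
          have : c * (ε * ent p) ≤ c * (ent (push V.mkQ p) + ent (cpow (push V.mkQ p) j)) :=
            mul_le_mul_of_nonneg_left (by linarith) hc.le
          linarith
        linarith
      push_cast
      linarith

theorem main (k : ℕ) (hk : 2 ≤ k) (ε : ℝ) (hε : 0 < ε) : ∃ L : ℝ, 0 < L ∧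
    ∀ (G : Type) [AddCommGroup G] [Module (ZMod 2) G] [Finite G] (p : G → ℝ), IsDist p →
      ∃ V : Submodule (ZMod 2) G,
        ent (unifOn (V : Set G)) ≤ L * ent p ∧
        (ent (push V.mkQ p) ≤ ε * ent p ∨
          ent (indepSum k fun _ => push V.mkQ p) ≥ ((k : ℝ) - ε) * ent (push V.mkQ p)) := by
  obtain ⟨K, rfl⟩ : ∃ K, k = K + 1 := ⟨k - 1, by omega⟩
  have hη : 0 < ε / ((K + 1) * (K + 1)) := by positivity
  obtain ⟨L, c, hL, hc, hc1, hP⟩ := AA_all hη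
  obtain ⟨N, hN⟩ := exists_nat_gt (K * (K + 1) / (c * ε))
  have hcε : 0 < c * ε := by positivity
  rw [div_lt_iff₀ hcε] at hN
  refine ⟨N * (L * (K + 1)) + 1, by positivity, ?_⟩
  intro G _ _ _ p hp
  have a := ent_nonneg hp
  obtain ⟨V, h1, h2⟩ := main_aux (ε := ε) hc hL hP K N G p hp
  have hp' := isDist_push V.mkQ hp
  have b := ent_nonneg hp'
  refine ⟨V, ?_, ?_⟩
  · rw [ent_unif]; linarith
  rcases h2 with h2 | h2 | h2
  · exact Or.inl h2
  · right
    rw [indepSum_eq]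
    have h3 := ent_cpow_ge hp' hη.le h2 K le_rfl
    have h4 : K * (ε / ((K + 1) * (K + 1)) * ((K + 1) * ent (push V.mkQ p))) ≤
        ε * ent (push V.mkQ p) := by
      have e : K * (ε / ((K + 1) * (K + 1)) * ((K + 1) * ent (push V.mkQ p))) =
        (K / (K + 1)) * (ε * ent (push V.mkQ p)) := by field_simp
      rw [e]
      have : (K : ℝ) / (K + 1) ≤ 1 := by
        rw [div_le_one (by positivity)]; linarith
      exact mul_le_of_le_one_left (by positivity) this
    push_cast
    linarith
  · left
    have h3 : 0 ≤ Pot V.mkQ p K := Finset.sum_nonneg fun j _ => add_nonneg b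
      (ent_nonneg (isDist_push V.mkQ (isDist_cpow hp j)))
    have h4 : ent p ≤ 0 := by
      by_contra h
      push Not at h
      have := mul_lt_mul_of_pos_right hN h
      linarith
    have := ent_push_le V.mkQ hp.1
    have h5 : ent p = 0 := le_antisymm h4 a
    rw [h5] at this ⊢
    linarith

end DS

/-- For every `k ≥ 2` and `ε > 0` there is `L > 0` such that for any finitely
supported `X` on `𝔽₂ⁿ` there is a subspace `V` with `H[𝐔_V] ≤ L·H[X]` such that, writing
`X̃ = π_V(X)`, either `H[X̃] ≤ ε H[X]`, or `X̃` is `(k, ε)`-dissociated: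
`H[X̃₁ + ⋯ + X̃_k] ≥ (k − ε) H[X̃]`. -/
theorem statement5 :
    ∀ k : ℕ, 2 ≤ k → ∀ ε : ℝ, 0 < ε → ∃ L : ℝ, 0 < L ∧
      ∀ (n : ℕ) (p : Fvec n → ℝ), IsDist p →
        ∃ V : Submodule (ZMod 2) (Fvec n),
          ent (unifOn (V : Set (Fvec n))) ≤ L * ent p ∧
          (ent (push V.mkQ p) ≤ ε * ent p ∨
            ent (indepSum k fun _ => push V.mkQ p) ≥ ((k : ℝ) - ε) * ent (push V.mkQ p)) := by
  intro k hk ε hε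
  obtain ⟨L, hL, h⟩ := DS.main k hk ε hε
  exact ⟨L, hL, fun n p hp => h (Fvec n) p hp⟩
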